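/- Let 𝕜 be an algebraically closed field of characteristic zero. Let Ω_1,…,Ω_d ∈ 𝕜[x,y,z] be homogeneous polynomials with isolated singularities whose degrees are pairwise distinct and each at least 5, and let ξ_1,…,ξ_d ∈ 𝕜. Then the group of Poisson 𝕜-algebra automorphisms of P = P_{Ω_1−ξ_1} ⊗_𝕜 ⋯ ⊗_𝕜 P_{Ω_d−ξ_d} is finite. -/

import Mathlib

open scoped TensorProduct

/-- A Poisson bracket on a commutative algebra `A` over `𝕜`: a bilinear, antisymmetric
bracket satisfying the Jacobi identity and the Leibniz rule. -/
structure PoissonStructure (𝕜 A : Type*) [CommRing 𝕜] [CommRing A] [Algebra 𝕜 A] where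
  bracket : A → A → A
  add_left : ∀ a b c : A, bracket (a + b) c = bracket a c + bracket b c
  smul_left : ∀ (r : 𝕜) (a b : A), bracket (r • a) b = r • bracket a b
  antisymm : ∀ a b : A, bracket a b = - bracket b a
  jacobi : ∀ a b c : A,
    bracket a (bracket b c) + bracket b (bracket c a) + bracket c (bracket a b) = 0
  leibniz : ∀ a b c : A, bracket a (b * c) = bracket a b * c + b * bracket a c

/-- `f` is a morphism of Poisson algebras. -/
def IsPoissonHom {𝕜 A B : Type*} [CommRing 𝕜] [CommRing A] [CommRing B]
    [Algebra 𝕜 A] [Algebra 𝕜 B]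
    (PA : PoissonStructure 𝕜 A) (PB : PoissonStructure 𝕜 B) (f : A →ₐ[𝕜] B) : Prop :=
  ∀ a b : A, f (PA.bracket a b) = PB.bracket (f a) (f b)

/-- A Poisson algebra is Dixmier if every injective Poisson endomorphism is bijective. -/
def IsDixmier (𝕜 A : Type*) [CommRing 𝕜] [CommRing A] [Algebra 𝕜 A]
    (PA : PoissonStructure 𝕜 A) : Prop :=
  ∀ f : A →ₐ[𝕜] A, IsPoissonHom PA PA f → Function.Injective f → Function.Bijective f

/-- The tensor-product Poisson bracket on `A ⊗[𝕜] B`. -/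
def IsTensorBracket {𝕜 A B : Type*} [CommRing 𝕜] [CommRing A] [CommRing B]
    [Algebra 𝕜 A] [Algebra 𝕜 B] (PA : PoissonStructure 𝕜 A) (PB : PoissonStructure 𝕜 B)
    (PT : PoissonStructure 𝕜 (A ⊗[𝕜] B)) : Prop :=
  ∀ (a a' : A) (b b' : B),
    PT.bracket (a ⊗ₜ[𝕜] b) (a' ⊗ₜ[𝕜] b') =
      PA.bracket a a' ⊗ₜ[𝕜] (b * b') + (a * a') ⊗ₜ[𝕜] PB.bracket b b'

/-- `A` is `R`-Dixmier: every injective Poisson morphism `A → A ⊗ R` has image `A ⊗ 𝕜·1`. -/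
def IsRelDixmier (𝕜 A R : Type*) [CommRing 𝕜] [CommRing A] [CommRing R]
    [Algebra 𝕜 A] [Algebra 𝕜 R] (PA : PoissonStructure 𝕜 A)
    (PT : PoissonStructure 𝕜 (A ⊗[𝕜] R)) : Prop :=
  ∀ f : A →ₐ[𝕜] A ⊗[𝕜] R, IsPoissonHom PA PT f → Function.Injective f →
    Set.range f = Set.range fun a : A => a ⊗ₜ[𝕜] (1 : R)

/-- A Poisson algebra is Poisson simple if its only Poisson ideals are `0` and the whole ring. -/
def IsPoissonSimple {𝕜 A : Type*} [CommRing 𝕜] [CommRing A] [Algebra 𝕜 A]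
    (PA : PoissonStructure 𝕜 A) : Prop :=
  ∀ I : Ideal A, (∀ x : A, ∀ y ∈ I, PA.bracket x y ∈ I) → I = ⊥ ∨ I = ⊤

open MvPolynomial in
/-- The Jacobian Poisson bracket with potential `Ω` on `𝕜[x,y,z]`. -/
noncomputable def jacBracket {𝕜 : Type*} [CommRing 𝕜]
    (Ω f g : MvPolynomial (Fin 3) 𝕜) : MvPolynomial (Fin 3) 𝕜 :=
  Matrix.det (Matrix.of
    ![![pderiv 0 f, pderiv 1 f, pderiv 2 f],
      ![pderiv 0 g, pderiv 1 g, pderiv 2 g],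
      ![pderiv 0 Ω, pderiv 1 Ω, pderiv 2 Ω]])

open MvPolynomial in
/-- `Ω` has an isolated singularity at the origin. -/
def HasIsolatedSingularity {𝕜 : Type*} [Field 𝕜] (Ω : MvPolynomial (Fin 3) 𝕜) : Prop :=
  FiniteDimensional 𝕜
    (MvPolynomial (Fin 3) 𝕜 ⧸ Ideal.span {pderiv (0 : Fin 3) Ω, pderiv 1 Ω, pderiv 2 Ω})

/-- The underlying commutative algebra of `P_{Ω-ξ} = 𝕜[x,y,z]/(Ω-ξ)`. -/
def PQuot (𝕜 : Type*) [CommRing 𝕜] (Ω : MvPolynomial (Fin 3) 𝕜) (ξ : 𝕜) : Type _ :=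
  MvPolynomial (Fin 3) 𝕜 ⧸ Ideal.span {Ω - MvPolynomial.C ξ}

noncomputable instance {𝕜 : Type*} [CommRing 𝕜] (Ω : MvPolynomial (Fin 3) 𝕜) (ξ : 𝕜) :
    CommRing (PQuot 𝕜 Ω ξ) :=
  inferInstanceAs (CommRing (MvPolynomial (Fin 3) 𝕜 ⧸ Ideal.span {Ω - MvPolynomial.C ξ}))

noncomputable instance {𝕜 : Type*} [CommRing 𝕜] (Ω : MvPolynomial (Fin 3) 𝕜) (ξ : 𝕜) :
    Algebra 𝕜 (PQuot 𝕜 Ω ξ) :=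
  inferInstanceAs (Algebra 𝕜 (MvPolynomial (Fin 3) 𝕜 ⧸ Ideal.span {Ω - MvPolynomial.C ξ}))

/-- The canonical (surjective) projection `𝕜[x,y,z] → P_{Ω-ξ}`. -/
noncomputable def PQuot.mk {𝕜 : Type*} [CommRing 𝕜] (Ω : MvPolynomial (Fin 3) 𝕜) (ξ : 𝕜)
    (f : MvPolynomial (Fin 3) 𝕜) : PQuot 𝕜 Ω ξ :=
  Ideal.Quotient.mk (Ideal.span {Ω - MvPolynomial.C ξ}) f

/-- `P` is the Poisson bracket on `P_{Ω-ξ}` induced from the Jacobian bracket on `A_Ω`. -/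
def IsInducedBracket {𝕜 : Type*} [CommRing 𝕜] (Ω : MvPolynomial (Fin 3) 𝕜) (ξ : 𝕜)
    (P : PoissonStructure 𝕜 (PQuot 𝕜 Ω ξ)) : Prop :=
  ∀ f g : MvPolynomial (Fin 3) 𝕜,
    P.bracket (PQuot.mk Ω ξ f) (PQuot.mk Ω ξ g) = PQuot.mk Ω ξ (jacBracket Ω f g)

open PiTensorProduct in
/-- The Poisson bracket on a finite tensor product `⨂[𝕜] i, A i`. -/
def IsPiTensorBracket {𝕜 : Type*} [CommRing 𝕜] {d : ℕ} {A : Fin d → Type*}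
    [∀ i, CommRing (A i)] [∀ i, Algebra 𝕜 (A i)]
    (P : ∀ i, PoissonStructure 𝕜 (A i))
    (PT : PoissonStructure 𝕜 (⨂[𝕜] i, A i)) : Prop :=
  ∀ a b : (i : Fin d) → A i,
    PT.bracket (⨂ₜ[𝕜] i, a i) (⨂ₜ[𝕜] i, b i) =
      ∑ i : Fin d,
        ⨂ₜ[𝕜] j, Function.update (fun j => a j * b j) i ((P i).bracket (a i) (b i)) j

/-- The Poisson-torus bracket associated to a matrix `Λ` on the Laurent polynomial ring
`𝕜[x₁^{±1},…,xₙ^{±1}]`, realized as the group algebra of `ℤⁿ`: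
`{x^u, x^v} = (Σ_{i,j} uᵢ λᵢⱼ vⱼ) x^{u+v}`. -/
def IsTorusBracket {𝕜 : Type*} [CommRing 𝕜] (n : ℕ) (Λ : Matrix (Fin n) (Fin n) 𝕜)
    (P : PoissonStructure 𝕜 (AddMonoidAlgebra 𝕜 (Fin n → ℤ))) : Prop :=
  ∀ u v : Fin n → ℤ,
    P.bracket (AddMonoidAlgebra.single u (1 : 𝕜)) (AddMonoidAlgebra.single v (1 : 𝕜)) =
      (∑ i, ∑ j, (u i : 𝕜) * Λ i j * (v j : 𝕜)) • AddMonoidAlgebra.single (u + v) (1 : 𝕜)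

/-- `ν : A → ℤ ∪ {∞}` is a `w`-valuation on the Poisson algebra `A`. -/
structure IsWValuation {𝕜 A : Type*} [CommRing 𝕜] [CommRing A] [Algebra 𝕜 A]
    (P : PoissonStructure 𝕜 A) (w : ℤ) (ν : A → WithTop ℤ) : Prop where
  eq_top_iff : ∀ a : A, ν a = ⊤ ↔ a = 0
  scalar : ∀ c : 𝕜, c ≠ 0 → ν (algebraMap 𝕜 A c) = 0
  map_mul : ∀ a b : A, ν (a * b) = ν a + ν b
  map_add : ∀ a b : A, min (ν a) (ν b) ≤ ν (a + b)
  map_bracket : ∀ a b : A, ν a + ν b ≤ ν (P.bracket a b) + (w : WithTop ℤ)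

/-!
Filter the tensor product by degree in its `i`-th factor. Let `φ` be a Poisson automorphism and `m`
the largest degree of the images of the coordinates of the `j`-th factor. Then
`{φ y, φ z} = φ (∂_x Ω_j)` and its cyclic versions bound the images of the partial derivatives by
`2 m + n_i - 3`. A power of each coordinate lies in the Jacobian ideal, so a power of its image
satisfies the corresponding bound, which forces `(n_j - 3) m ≤ n_i - 3`. As the degrees are
distinct, `φ` preserves each factor and acts on its coordinates by an affine symmetry of `Ω_j`.

It remains to see that an isolated singularity `Ω` of degree `n ≥ 4` has finitely many affine
symmetries. Their matrix entries, translation entries and inverse determinants generate a finitely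
generated algebra, and a derivation of this algebra gives an affine vector field `E` with
`E Ω = (tr E) Ω + c`. A field with `E Ω = 0` vanishes: an eigenvalue `μ` of its linear part comes
with the eigenvalue `-(n - 1) μ`, so the linear part is nilpotent, and then it is zero because the
gradient of `Ω` vanishes only at the origin. Hence in general `E` is a multiple of the Euler field,
and comparing traces gives `E = 0` as `n ≠ 3`. So the algebra is unramified, hence finite, over `𝕜`.
-/

section

open MvPolynomial

section HomogeneousComponents

variable {σ R : Type*} [CommSemiring R]

lemma coeff_eq_zero_of_totalDegree_lt_degree {p : MvPolynomial σ R} {d : σ →₀ ℕ}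
    (h : p.totalDegree < d.degree) : coeff d p = 0 :=
  coeff_eq_zero_of_totalDegree_lt h

lemma homogeneousComponent_mul_of_totalDegree_le {p q : MvPolynomial σ R} {k m : ℕ}
    (hp : p.totalDegree ≤ k) (hq : q.totalDegree ≤ m) :
    homogeneousComponent (k + m) (p * q) = homogeneousComponent k p * homogeneousComponent m q := by
  classical
  ext d
  simp only [coeff_homogeneousComponent, coeff_mul]
  conv_lhs => rw [← Finset.sum_const_zero, ← Finset.sum_ite_irrel]
  refine Finset.sum_congr rfl fun x hx => ?_
  have hd : x.1.degree + x.2.degree = d.degree := by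
    rw [← map_add, Finset.HasAntidiagonal.mem_antidiagonal.1 hx]
  have h₁ : k < x.1.degree → coeff x.1 p = 0 := fun h =>
    coeff_eq_zero_of_totalDegree_lt_degree (hp.trans_lt h)
  have h₂ : m < x.2.degree → coeff x.2 q = 0 := fun h =>
    coeff_eq_zero_of_totalDegree_lt_degree (hq.trans_lt h)
  grind

lemma homogeneousComponent_mul_of_isHomogeneous {p : MvPolynomial σ R} {m : ℕ}
    (q : MvPolynomial σ R) (k : ℕ) (hp : p.IsHomogeneous m) :
    homogeneousComponent (k + m) (q * p) = homogeneousComponent k q * p := by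
  classical
  ext d
  simp only [coeff_homogeneousComponent, coeff_mul]
  conv_lhs => rw [← Finset.sum_const_zero, ← Finset.sum_ite_irrel]
  refine Finset.sum_congr rfl fun x hx => ?_
  have hd : x.1.degree + x.2.degree = d.degree := by
    rw [← map_add, Finset.HasAntidiagonal.mem_antidiagonal.1 hx]
  have h₂ : x.2.degree ≠ m → coeff x.2 p = 0 := hp.coeff_eq_zero
  grind

lemma homogeneousComponent_pow_of_totalDegree_le {p : MvPolynomial σ R} {k : ℕ}
    (hp : p.totalDegree ≤ k) (N : ℕ) :
    homogeneousComponent (N * k) (p ^ N) = homogeneousComponent k p ^ N := by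
  induction N with
  | zero => simp [homogeneousComponent_zero]
  | succ N ih =>
    have hN : (p ^ N).totalDegree ≤ N * k :=
      (totalDegree_pow p N).trans (Nat.mul_le_mul_left N hp)
    rw [pow_succ, pow_succ, add_one_mul, homogeneousComponent_mul_of_totalDegree_le hN hp, ih]

lemma totalDegree_pderiv_lt {i : σ} {p : MvPolynomial σ R} (h : pderiv i p ≠ 0) :
    (pderiv i p).totalDegree < p.totalDegree := by
  have hp : 0 < p.totalDegree := Nat.pos_of_ne_zero fun hp => h <| by
    rw [totalDegree_eq_zero_iff_eq_C.1 hp, pderiv_C]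
  refine (Finset.sup_lt_iff hp).2 fun d hd => ?_
  have hd' : d + Finsupp.single i 1 ∈ p.support := by
    rw [mem_support_iff, coeff_pderiv] at hd
    exact mem_support_iff.2 (left_ne_zero_of_mul hd)
  calc d.degree < (d + Finsupp.single i 1).degree := by simp
    _ ≤ p.totalDegree := le_totalDegree hd'

lemma homogeneousComponent_pderiv (i : σ) (p : MvPolynomial σ R) (m : ℕ) :
    homogeneousComponent m (pderiv i p) = pderiv i (homogeneousComponent (m + 1) p) := by
  ext d
  simp only [coeff_homogeneousComponent, coeff_pderiv, map_add, Finsupp.degree_single,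
    add_left_inj]
  split_ifs <;> simp

lemma homogeneousComponent_aeval_X (i : σ) (q : Polynomial R) (k : ℕ) :
    homogeneousComponent k (Polynomial.aeval (X i : MvPolynomial σ R) q) =
      C (q.coeff k) * X i ^ k := by
  induction q using Polynomial.induction_on' with
  | add p q hp hq => simp only [map_add, Polynomial.coeff_add, add_mul, hp, hq]
  | monomial m a =>
    rw [Polynomial.aeval_monomial, algebraMap_eq, homogeneousComponent_C_mul,
      homogeneousComponent_of_mem (isHomogeneous_X_pow i m), Polynomial.coeff_monomial]
    split_ifs <;> simp_all

end HomogeneousComponents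

section Polynomials

variable {σ R : Type*}

lemma totalDegree_sub_homogeneousComponent_le [CommRing R] {p : MvPolynomial σ R} {m : ℕ}
    (hp : p.totalDegree ≤ m + 1) : (p - homogeneousComponent (m + 1) p).totalDegree ≤ m := by
  refine Finset.sup_le fun d hd => Nat.le_of_lt_succ (lt_of_not_ge fun
    (hdm : m + 1 ≤ d.degree) => ?_)
  refine mem_support_iff.1 hd ?_
  rw [coeff_sub, coeff_homogeneousComponent]
  split_ifs with h
  · exact sub_self _
  · rw [sub_zero]
    exact coeff_eq_zero_of_totalDegree_lt_degree (hp.trans_lt (lt_of_le_of_ne hdm (Ne.symm h)))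

lemma homogeneousComponent_totalDegree_ne_zero [CommSemiring R] {p : MvPolynomial σ R}
    (hp : p ≠ 0) : homogeneousComponent p.totalDegree p ≠ 0 := by
  obtain ⟨d, hd, hdeg⟩ := p.support.exists_mem_eq_sup (support_nonempty.2 hp)
    fun s => s.sum fun _ e => e
  have hd' : d.degree = p.totalDegree := hdeg.symm
  refine ne_zero_iff.2 ⟨d, ?_⟩
  rw [coeff_homogeneousComponent, if_pos hd']
  exact mem_support_iff.1 hd

lemma squarefree_of_squarefree_homogeneousComponent [CommRing R] [IsDomain R]
    {p : MvPolynomial σ R} (h : Squarefree (homogeneousComponent p.totalDegree p)) :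
    Squarefree p := by
  rintro f ⟨g, hfg⟩
  have hp : p ≠ 0 := by
    rintro rfl
    exact h.ne_zero (map_zero _)
  obtain ⟨hff, hg⟩ := mul_ne_zero_iff.1 (hfg ▸ hp)
  have hf := left_ne_zero_of_mul hff
  have htop : homogeneousComponent p.totalDegree p =
      homogeneousComponent f.totalDegree f * homogeneousComponent f.totalDegree f *
        homogeneousComponent g.totalDegree g := by
    conv_lhs => rw [hfg, totalDegree_mul_of_isDomain hff hg, totalDegree_mul_of_isDomain hf hf]
    rw [homogeneousComponent_mul_of_totalDegree_le (totalDegree_mul_of_isDomain hf hf).le le_rfl,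
      homogeneousComponent_mul_of_totalDegree_le le_rfl le_rfl]
  have hunit := isUnit_iff_totalDegree_of_isReduced.1 (h _ ⟨_, htop⟩)
  have hdeg : f.totalDegree = 0 := by
    rw [← (homogeneousComponent_isHomogeneous f.totalDegree f).totalDegree
      (homogeneousComponent_totalDegree_ne_zero hf), hunit.2]
  rw [hdeg, homogeneousComponent_zero, coeff_zero_C] at hunit
  exact isUnit_iff_totalDegree_of_isReduced.2 ⟨hunit.1, hdeg⟩

lemma dvd_of_dvd_mul_of_isRelPrime {α : Type*} [CommMonoidWithZero α]
    [UniqueFactorizationMonoid α] {p f a b : α} (hab : IsRelPrime a b) (ha : p ∣ f * a)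
    (hb : p ∣ f * b) : p ∣ f := by
  let _ := UniqueFactorizationMonoid.toGCDMonoid α
  have hgcd : IsUnit (gcd a b) := gcd_isUnit_iff_isRelPrime.2 hab
  exact hgcd.dvd_mul_right.1 ((dvd_gcd ha hb).trans (gcd_mul_left' f a b).dvd)

end Polynomials

/-- The i.s. potentials of degree `n`: homogeneous polynomials with an isolated singularity. -/
structure IsISPotential {𝕜 : Type*} [Field 𝕜] (Ω : MvPolynomial (Fin 3) 𝕜) (n : ℕ) : Prop where
  isHomogeneous : Ω.IsHomogeneous n
  hasIsolatedSingularity : HasIsolatedSingularity Ω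

namespace IsISPotential

variable {𝕜 : Type*} [Field 𝕜] {Ω : MvPolynomial (Fin 3) 𝕜} {n : ℕ}

lemma exists_X_pow_eq_sum_mul_pderiv (hΩ : IsISPotential Ω n) (u : Fin 3) :
    ∃ k, ∃ c : Fin 3 → MvPolynomial (Fin 3) 𝕜, (∀ l, (c l).IsHomogeneous k) ∧
      X u ^ (k + (n - 1)) = ∑ l, c l * pderiv l Ω := by
  set J := Ideal.span {pderiv (0 : Fin 3) Ω, pderiv 1 Ω, pderiv 2 Ω}
  have : FiniteDimensional 𝕜 (MvPolynomial (Fin 3) 𝕜 ⧸ J) := hΩ.hasIsolatedSingularity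
  obtain ⟨q, hq, hq0⟩ := Algebra.IsIntegral.isIntegral (R := 𝕜) (Ideal.Quotient.mkₐ 𝕜 J (X u))
  have hmem : Polynomial.aeval (X u : MvPolynomial (Fin 3) 𝕜) q ∈ J := by
    rw [← Ideal.Quotient.eq_zero_iff_mem, ← Ideal.Quotient.mkₐ_eq_mk 𝕜 J,
      ← Polynomial.aeval_algHom_apply]
    exact hq0
  obtain ⟨b, hb⟩ : ∃ b : Fin 3 → MvPolynomial (Fin 3) 𝕜,
      ∑ l, b l * pderiv l Ω = Polynomial.aeval (X u : MvPolynomial (Fin 3) 𝕜) q := by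
    refine Ideal.mem_span_range_iff_exists_fun.1 ?_
    convert hmem using 2
    ext
    simp [Fin.exists_fin_succ, eq_comm]
  refine ⟨q.natDegree, fun l => homogeneousComponent q.natDegree (b l * X u ^ (n - 1)),
    fun l => homogeneousComponent_isHomogeneous _ _, ?_⟩
  have hlead := homogeneousComponent_aeval_X (R := 𝕜) u q q.natDegree
  rw [hq.coeff_natDegree, C_1, one_mul] at hlead
  calc X u ^ (q.natDegree + (n - 1))
      = homogeneousComponent (q.natDegree + (n - 1))
          (Polynomial.aeval (X u) q * X u ^ (n - 1)) := by
        rw [homogeneousComponent_mul_of_isHomogeneous _ _ (isHomogeneous_X_pow u _), hlead, pow_add]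
    _ = homogeneousComponent (q.natDegree + (n - 1))
          (∑ l, b l * X u ^ (n - 1) * pderiv l Ω) := by
        rw [← hb, Finset.sum_mul]
        simp_rw [mul_right_comm]
    _ = _ := by
        rw [map_sum]
        simp_rw [homogeneousComponent_mul_of_isHomogeneous _ _ hΩ.isHomogeneous.pderiv]

lemma exists_pderiv_ne_zero (hΩ : IsISPotential Ω n) : ∃ l, pderiv l Ω ≠ 0 := by
  by_contra! h
  obtain ⟨k, c, -, hc⟩ := hΩ.exists_X_pow_eq_sum_mul_pderiv 0
  refine pow_ne_zero (k + (n - 1)) (X_ne_zero (R := 𝕜) (0 : Fin 3)) ?_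
  simp [hc, h]

lemma ne_zero (hΩ : IsISPotential Ω n) : Ω ≠ 0 := by
  rintro rfl
  obtain ⟨l, hl⟩ := hΩ.exists_pderiv_ne_zero
  exact hl (map_zero _)

lemma degree_pos (hΩ : IsISPotential Ω n) : 0 < n := by
  obtain ⟨l, hl⟩ := hΩ.exists_pderiv_ne_zero
  refine Nat.pos_of_ne_zero fun hn => hl ?_
  have hdeg : Ω.totalDegree = 0 := Nat.le_zero.1 (hn ▸ hΩ.isHomogeneous.totalDegree_le)
  rw [totalDegree_eq_zero_iff_eq_C.1 hdeg, pderiv_C]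

lemma totalDegree_eq (hΩ : IsISPotential Ω n) : Ω.totalDegree = n :=
  hΩ.isHomogeneous.totalDegree hΩ.ne_zero

lemma eq_zero_of_forall_eval_pderiv_eq_zero (hΩ : IsISPotential Ω n) {v : Fin 3 → 𝕜}
    (hv : ∀ l, eval v (pderiv l Ω) = 0) : v = 0 := by
  funext u
  obtain ⟨k, c, -, hc⟩ := hΩ.exists_X_pow_eq_sum_mul_pderiv u
  have hpow := congrArg (eval v) hc
  simp only [map_pow, eval_X, map_sum, map_mul, hv, mul_zero, Finset.sum_const_zero] at hpow
  exact eq_zero_of_pow_eq_zero hpow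

lemma dvd_of_forall_dvd_mul_pderiv (hΩ : IsISPotential Ω n) {p f : MvPolynomial (Fin 3) 𝕜}
    (h : ∀ l, p ∣ f * pderiv l Ω) : p ∣ f := by
  have hX (u : Fin 3) : ∃ N, p ∣ f * X u ^ N := by
    obtain ⟨k, c, -, hc⟩ := hΩ.exists_X_pow_eq_sum_mul_pderiv u
    refine ⟨k + (n - 1), ?_⟩
    rw [hc, Finset.mul_sum]
    refine Finset.dvd_sum fun l _ => ?_
    rw [mul_left_comm]
    exact (h l).mul_left _
  obtain ⟨a, ha⟩ := hX 0
  obtain ⟨b, hb⟩ := hX 1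
  have hrel : IsRelPrime (X 0 : MvPolynomial (Fin 3) 𝕜) (X 1) := by
    rw [X_prime.irreducible.isRelPrime_iff_not_dvd, X_dvd_X]
    simp
  exact dvd_of_dvd_mul_of_isRelPrime hrel.pow ha hb

lemma squarefree (hΩ : IsISPotential Ω n) : Squarefree Ω := by
  rintro f ⟨g, hfg⟩
  refine isUnit_of_dvd_one (hΩ.dvd_of_forall_dvd_mul_pderiv fun l => ?_)
  refine ⟨pderiv l f * g + pderiv l f * g + f * pderiv l g, ?_⟩
  rw [hfg, pderiv_mul, pderiv_mul]
  ring

lemma totalDegree_sub_C (hΩ : IsISPotential Ω n) (ξ : 𝕜) : (Ω - C ξ).totalDegree = n := by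
  rw [sub_eq_add_neg, totalDegree_add_eq_left_of_totalDegree_lt, hΩ.totalDegree_eq]
  rw [totalDegree_neg, totalDegree_C, hΩ.totalDegree_eq]
  exact hΩ.degree_pos

lemma homogeneousComponent_sub_C (hΩ : IsISPotential Ω n) (ξ : 𝕜) :
    homogeneousComponent n (Ω - C ξ) = Ω := by
  rw [map_sub, homogeneousComponent_eq_self hΩ.isHomogeneous,
    homogeneousComponent_eq_zero n (C ξ) (by simpa using hΩ.degree_pos), sub_zero]

lemma squarefree_sub_C (hΩ : IsISPotential Ω n) (ξ : 𝕜) : Squarefree (Ω - C ξ) := by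
  apply squarefree_of_squarefree_homogeneousComponent
  rw [hΩ.totalDegree_sub_C, hΩ.homogeneousComponent_sub_C]
  exact hΩ.squarefree

variable {ξ : 𝕜} {f : MvPolynomial (Fin 3) 𝕜}

lemma eq_zero_of_sub_C_dvd (hΩ : IsISPotential Ω n) (hf : Ω - C ξ ∣ f)
    (hd : f.totalDegree < n) : f = 0 := by
  by_contra h0
  have := totalDegree_le_of_dvd_of_isDomain hf h0
  rw [hΩ.totalDegree_sub_C] at this
  omega

lemma dvd_homogeneousComponent_of_sub_C_dvd (hΩ : IsISPotential Ω n) {m : ℕ}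
    (hf : Ω - C ξ ∣ f) (hd : f.totalDegree ≤ m) : Ω ∣ homogeneousComponent m f := by
  obtain ⟨g, rfl⟩ := hf
  obtain rfl | hg := eq_or_ne g 0
  · simp
  have hdeg := hΩ.totalDegree_sub_C ξ
  have h0 : Ω - C ξ ≠ 0 := (hΩ.squarefree_sub_C ξ).ne_zero
  rw [totalDegree_mul_of_isDomain h0 hg, hdeg] at hd
  obtain ⟨k, rfl⟩ := Nat.exists_eq_add_of_le ((Nat.le_add_right n _).trans hd)
  rw [homogeneousComponent_mul_of_totalDegree_le hdeg.le (by omega), hΩ.homogeneousComponent_sub_C]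
  exact dvd_mul_right _ _

lemma exists_totalDegree_le_of_dvd_homogeneousComponent (hΩ : IsISPotential Ω n) (ξ : 𝕜) {m : ℕ}
    (hd : f.totalDegree ≤ m + 1) (hf : Ω ∣ homogeneousComponent (m + 1) f) :
    ∃ g : MvPolynomial (Fin 3) 𝕜, g.totalDegree ≤ m ∧ Ω - C ξ ∣ f - g := by
  obtain ⟨h, hh⟩ := hf
  have hdegh : h.totalDegree ≤ m := by
    obtain rfl | h0 := eq_or_ne h 0
    · simp
    have hle := (homogeneousComponent_isHomogeneous (m + 1) f).totalDegree_le
    rw [hh, totalDegree_mul_of_isDomain hΩ.ne_zero h0, hΩ.totalDegree_eq] at hle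
    have := hΩ.degree_pos
    omega
  refine ⟨f - homogeneousComponent (m + 1) f + C ξ * h, ?_, h, ?_⟩
  · refine (totalDegree_add _ _).trans (max_le (totalDegree_sub_homogeneousComponent_le hd) ?_)
    exact (totalDegree_mul _ _).trans (by simpa using hdegh)
  · rw [hh]
    ring

end IsISPotential

section JacobianBracket

variable {R : Type*} [CommRing R] (Ω f g : MvPolynomial (Fin 3) R)

lemma jacBracket_eq_sum : jacBracket Ω f g =
    ∑ l, pderiv l Ω *
      (pderiv (l + 1) f * pderiv (l + 2) g - pderiv (l + 2) f * pderiv (l + 1) g) := by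
  simp only [jacBracket, Matrix.det_fin_three, Matrix.of_apply, Matrix.cons_val, Fin.sum_univ_three,
    Fin.reduceAdd, zero_add]
  ring

lemma jacBracket_X_right (l : Fin 3) : jacBracket Ω f (X l) =
    pderiv (l + 2) f * pderiv (l + 1) Ω - pderiv (l + 1) f * pderiv (l + 2) Ω := by
  fin_cases l <;>
    simp [jacBracket_eq_sum, Fin.sum_univ_three, pderiv_X, mul_comm, sub_eq_add_neg, add_comm]

lemma jacBracket_X_X (l : Fin 3) : jacBracket Ω (X (l + 1)) (X (l + 2)) = pderiv l Ω := by
  fin_cases l <;> simp [jacBracket_eq_sum, Fin.sum_univ_three, pderiv_X]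

variable {Ω f g} {n : ℕ}

lemma totalDegree_jacBracket_le {k m : ℕ} (hΩ : Ω.IsHomogeneous n) (hf : f.totalDegree ≤ k)
    (hg : g.totalDegree ≤ m) : (jacBracket Ω f g).totalDegree ≤ k + m + (n - 3) := by
  have hterm (h i j : Fin 3) :
      (pderiv h Ω * (pderiv i f * pderiv j g)).totalDegree ≤ k + m + (n - 3) := by
    obtain h0 | h0 := eq_or_ne (pderiv h Ω * (pderiv i f * pderiv j g)) 0
    · simp [h0]
    have hΩ' := totalDegree_pderiv_lt (left_ne_zero_of_mul h0)
    have hf' := totalDegree_pderiv_lt (left_ne_zero_of_mul (right_ne_zero_of_mul h0))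
    have hg' := totalDegree_pderiv_lt (right_ne_zero_of_mul (right_ne_zero_of_mul h0))
    have hn := hΩ.totalDegree_le
    have h₁ := totalDegree_mul (pderiv h Ω) (pderiv i f * pderiv j g)
    have h₂ := totalDegree_mul (pderiv i f) (pderiv j g)
    omega
  rw [jacBracket_eq_sum]
  refine totalDegree_finsetSum_le fun l _ => ?_
  rw [mul_sub]
  exact (totalDegree_sub _ _).trans (max_le (hterm _ _ _) (hterm _ _ _))

lemma homogeneousComponent_jacBracket_X (hΩ : Ω.IsHomogeneous n) (l : Fin 3) (m : ℕ) :
    homogeneousComponent (m + (n - 1)) (jacBracket Ω f (X l)) =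
      jacBracket Ω (homogeneousComponent (m + 1) f) (X l) := by
  simp only [jacBracket_X_right, map_sub, homogeneousComponent_pderiv,
    homogeneousComponent_mul_of_isHomogeneous _ _ hΩ.pderiv]

-- Euler's identity for `g` and for `Ω`.
lemma nsmul_mul_pderiv_eq_jacBracket {m : ℕ} (hΩ : Ω.IsHomogeneous n) (hg : g.IsHomogeneous m)
    (k : Fin 3) : m • (g * pderiv k Ω) = n • (Ω * pderiv k g) +
      (X (k + 1) * jacBracket Ω g (X (k + 2)) - X (k + 2) * jacBracket Ω g (X (k + 1))) := by
  rw [← smul_mul_assoc, ← smul_mul_assoc, ← hΩ.sum_X_mul_pderiv, ← hg.sum_X_mul_pderiv]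
  simp only [jacBracket_X_right, Fin.sum_univ_three]
  fin_cases k <;> simp only [Fin.zero_eta, Fin.mk_one, Fin.reduceFinMk, Fin.reduceAdd, zero_add] <;>
    ring

end JacobianBracket

namespace IsISPotential

variable {𝕜 : Type*} [Field 𝕜] {Ω : MvPolynomial (Fin 3) 𝕜} {n : ℕ}

lemma dvd_of_forall_dvd_jacBracket_X [CharZero 𝕜] (hΩ : IsISPotential Ω n) {m : ℕ}
    {g : MvPolynomial (Fin 3) 𝕜} (hg : g.IsHomogeneous m) (hm : m ≠ 0)
    (h : ∀ l, Ω ∣ jacBracket Ω g (X l)) : Ω ∣ g := by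
  refine hΩ.dvd_of_forall_dvd_mul_pderiv fun k => ?_
  have hunit : (C (m : 𝕜)⁻¹ : MvPolynomial (Fin 3) 𝕜) * C (m : 𝕜) = 1 := by
    rw [← C_mul, inv_mul_cancel₀ (Nat.cast_ne_zero.2 hm), C_1]
  have hdvd : Ω ∣ C (m : 𝕜) * (g * pderiv k Ω) := by
    rw [map_natCast, ← nsmul_eq_mul, nsmul_mul_pderiv_eq_jacBracket hΩ.isHomogeneous hg,
      nsmul_eq_mul]
    exact ((dvd_mul_right _ _).mul_left _).add (((h _).mul_left _).sub ((h _).mul_left _))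
  rw [← one_mul (g * _), ← hunit, mul_assoc]
  exact hdvd.mul_left _

end IsISPotential

namespace PQuot

section CommRing

variable {R : Type*} [CommRing R] (Ω : MvPolynomial (Fin 3) R) (ξ : R)

/-- The canonical projection `PQuot.mk` as a homomorphism of algebras. -/
noncomputable def mkₐ : MvPolynomial (Fin 3) R →ₐ[R] PQuot R Ω ξ :=
  Ideal.Quotient.mkₐ R (Ideal.span {Ω - C ξ})

lemma mkₐ_surjective : Function.Surjective (mkₐ Ω ξ) :=
  Ideal.Quotient.mk_surjective

variable {Ω ξ}

lemma mkₐ_eq_zero_iff {f : MvPolynomial (Fin 3) R} : mkₐ Ω ξ f = 0 ↔ Ω - C ξ ∣ f :=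
  Ideal.Quotient.eq_zero_iff_dvd _ _

lemma mkₐ_eq_mkₐ_iff {f g : MvPolynomial (Fin 3) R} :
    mkₐ Ω ξ f = mkₐ Ω ξ g ↔ Ω - C ξ ∣ f - g := by
  rw [← mkₐ_eq_zero_iff, map_sub, sub_eq_zero]

lemma bracket_mkₐ {P : PoissonStructure R (PQuot R Ω ξ)} (hP : IsInducedBracket Ω ξ P)
    (f g : MvPolynomial (Fin 3) R) :
    P.bracket (mkₐ Ω ξ f) (mkₐ Ω ξ g) = mkₐ Ω ξ (jacBracket Ω f g) :=
  hP f g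

variable (Ω ξ) in
/-- The filtration of `P_{Ω-ξ}` by degree: the classes of polynomials of degree at most `m`. -/
noncomputable def filtration (m : ℕ) : Submodule R (PQuot R Ω ξ) :=
  (restrictTotalDegree (Fin 3) R m).map (mkₐ Ω ξ).toLinearMap

variable {k m : ℕ} {a b : PQuot R Ω ξ}

lemma mem_filtration_iff :
    a ∈ filtration Ω ξ m ↔ ∃ f : MvPolynomial (Fin 3) R, f.totalDegree ≤ m ∧ mkₐ Ω ξ f = a := by
  simp [filtration, Submodule.mem_map, mem_restrictTotalDegree]

lemma filtration_mono : Monotone (filtration Ω ξ) := fun _ _ h =>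
  Submodule.map_mono fun f hf => by
    rw [mem_restrictTotalDegree] at hf ⊢
    exact hf.trans h

lemma mul_mem_filtration (ha : a ∈ filtration Ω ξ k) (hb : b ∈ filtration Ω ξ m) :
    a * b ∈ filtration Ω ξ (k + m) := by
  rw [mem_filtration_iff] at ha hb ⊢
  obtain ⟨f, hf, rfl⟩ := ha
  obtain ⟨g, hg, rfl⟩ := hb
  exact ⟨f * g, (totalDegree_mul f g).trans (add_le_add hf hg), map_mul _ _ _⟩

lemma exists_mem_filtration (a : PQuot R Ω ξ) : ∃ m, a ∈ filtration Ω ξ m := by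
  obtain ⟨f, rfl⟩ := mkₐ_surjective Ω ξ a
  exact ⟨_, mem_filtration_iff.2 ⟨f, le_rfl, rfl⟩⟩

variable (Ω ξ) in
lemma filtration_zero : filtration Ω ξ 0 = 1 := by
  ext a
  simp only [mem_filtration_iff, Nat.le_zero, totalDegree_eq_zero_iff_eq_C, Submodule.mem_one]
  refine ⟨?_, ?_⟩
  · rintro ⟨f, hf, rfl⟩
    exact ⟨coeff 0 f, by rw [hf, ← algebraMap_eq, AlgHom.commutes]; simp⟩
  · rintro ⟨c, rfl⟩
    exact ⟨C c, by simp, AlgHom.commutes _ _⟩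

lemma bracket_mem_filtration {P : PoissonStructure R (PQuot R Ω ξ)} {n : ℕ}
    (hΩ : Ω.IsHomogeneous n) (hP : IsInducedBracket Ω ξ P)
    (ha : a ∈ filtration Ω ξ k) (hb : b ∈ filtration Ω ξ m) :
    P.bracket a b ∈ filtration Ω ξ (k + m + (n - 3)) := by
  obtain ⟨f, hf, rfl⟩ := mem_filtration_iff.1 ha
  obtain ⟨g, hg, rfl⟩ := mem_filtration_iff.1 hb
  rw [bracket_mkₐ hP, mem_filtration_iff]
  exact ⟨_, totalDegree_jacBracket_le hΩ hf hg, rfl⟩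

end CommRing

section Field

variable {𝕜 : Type*} [Field 𝕜] {Ω : MvPolynomial (Fin 3) 𝕜} {ξ : 𝕜} {n : ℕ}

lemma mem_filtration_of_pow_mem_filtration (hΩ : IsISPotential Ω n) {m N M : ℕ}
    {a : PQuot 𝕜 Ω ξ} (ha : a ∈ filtration Ω ξ (m + 1)) (hM : M < N * (m + 1))
    (hN : a ^ N ∈ filtration Ω ξ M) : a ∈ filtration Ω ξ m := by
  obtain ⟨f, hf, rfl⟩ := mem_filtration_iff.1 ha
  obtain ⟨g, hg, hfg⟩ := mem_filtration_iff.1 hN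
  rw [← map_pow] at hfg
  have hdeg : (f ^ N - g).totalDegree ≤ N * (m + 1) :=
    (totalDegree_sub _ _).trans <| max_le
      ((totalDegree_pow f N).trans (Nat.mul_le_mul_left N hf)) (hg.trans hM.le)
  have htop := hΩ.dvd_homogeneousComponent_of_sub_C_dvd (mkₐ_eq_mkₐ_iff.1 hfg.symm) hdeg
  rw [map_sub, homogeneousComponent_eq_zero _ g (hg.trans_lt hM), sub_zero,
    homogeneousComponent_pow_of_totalDegree_le hf] at htop
  obtain ⟨h, hh, hfh⟩ := hΩ.exists_totalDegree_le_of_dvd_homogeneousComponent ξ hf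
    (hΩ.squarefree.isRadical N _ htop)
  exact mem_filtration_iff.2 ⟨h, hh, (mkₐ_eq_mkₐ_iff.2 hfh).symm⟩

lemma mem_filtration_of_bracket_X_eq_zero [CharZero 𝕜] (hΩ : IsISPotential Ω n) (hn : 3 ≤ n)
    {P : PoissonStructure 𝕜 (PQuot 𝕜 Ω ξ)} (hP : IsInducedBracket Ω ξ P) {m : ℕ}
    {a : PQuot 𝕜 Ω ξ} (ha : a ∈ filtration Ω ξ (m + 1))
    (h : ∀ l, P.bracket a (mkₐ Ω ξ (X l)) = 0) : a ∈ filtration Ω ξ m := by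
  obtain ⟨f, hf, rfl⟩ := mem_filtration_iff.1 ha
  have hdvd (l : Fin 3) : Ω ∣ jacBracket Ω (homogeneousComponent (m + 1) f) (X l) := by
    rw [← homogeneousComponent_jacBracket_X hΩ.isHomogeneous]
    refine hΩ.dvd_homogeneousComponent_of_sub_C_dvd (ξ := ξ) ?_ ?_
    · rw [← mkₐ_eq_zero_iff, ← bracket_mkₐ hP, h]
    · refine (totalDegree_jacBracket_le hΩ.isHomogeneous hf (totalDegree_X l).le).trans ?_
      omega
  obtain ⟨g, hg, hfg⟩ := hΩ.exists_totalDegree_le_of_dvd_homogeneousComponent ξ hf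
    (hΩ.dvd_of_forall_dvd_jacBracket_X (homogeneousComponent_isHomogeneous _ _) m.succ_ne_zero hdvd)
  exact mem_filtration_iff.2 ⟨g, hg, (mkₐ_eq_mkₐ_iff.2 hfg).symm⟩

lemma isReduced (hΩ : IsISPotential Ω n) (ξ : 𝕜) : IsReduced (PQuot 𝕜 Ω ξ) := by
  refine (Ideal.isRadical_iff_quotient_reduced _).1 ?_
  exact isRadical_iff_span_singleton.1 (hΩ.squarefree_sub_C ξ).isRadical

lemma nontrivial (hΩ : IsISPotential Ω n) (ξ : 𝕜) : Nontrivial (PQuot 𝕜 Ω ξ) := by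
  refine ⟨⟨mkₐ Ω ξ 1, 0, fun h => one_ne_zero (α := MvPolynomial (Fin 3) 𝕜) ?_⟩⟩
  exact hΩ.eq_zero_of_sub_C_dvd (mkₐ_eq_zero_iff.1 h) (by simpa using hΩ.degree_pos)

lemma finiteType (Ω : MvPolynomial (Fin 3) 𝕜) (ξ : 𝕜) : Algebra.FiniteType 𝕜 (PQuot 𝕜 Ω ξ) :=
  Algebra.FiniteType.of_surjective (mkₐ Ω ξ) (mkₐ_surjective Ω ξ)

end Field

end PQuot

section Characters

variable {𝕜 A : Type*} [Field 𝕜] [IsAlgClosed 𝕜] [CommRing A] [Algebra 𝕜 A]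

lemma exists_algHom_ker_eq [Algebra.FiniteType 𝕜 A] (M : Ideal A) [M.IsMaximal] :
    ∃ p : A →ₐ[𝕜] 𝕜, RingHom.ker p = M := by
  let _ := Ideal.Quotient.field M
  have : Module.Finite 𝕜 (A ⧸ M) := finite_of_finite_type_of_isJacobsonRing 𝕜 (A ⧸ M)
  let e : 𝕜 ≃ₐ[𝕜] A ⧸ M := AlgEquiv.ofBijective (Algebra.ofId 𝕜 (A ⧸ M))
    IsAlgClosed.algebraMap_bijective_of_isIntegral
  refine ⟨e.symm.toAlgHom.comp (Ideal.Quotient.mkₐ 𝕜 M), ?_⟩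
  ext a
  simp [RingHom.mem_ker, Ideal.Quotient.eq_zero_iff_mem]

lemma eq_zero_of_forall_algHom_apply_eq_zero [Algebra.FiniteType 𝕜 A] [IsReduced A] {a : A}
    (h : ∀ p : A →ₐ[𝕜] 𝕜, p a = 0) : a = 0 := by
  have : IsJacobsonRing A := isJacobsonRing_of_finiteType (A := 𝕜)
  have hrad : (⊥ : Ideal A).jacobson = ⊥ :=
    this.out ((Ideal.isRadical_iff_quotient_reduced ⊥).2
      (isReduced_of_injective _ (RingEquiv.quotientBot A).injective))
  rw [← Ideal.mem_bot, ← hrad, Ideal.jacobson, Ideal.mem_sInf]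
  rintro M ⟨-, hM⟩
  obtain ⟨p, rfl⟩ := exists_algHom_ker_eq (𝕜 := 𝕜) M
  exact h p

end Characters

section TensorFactors

open PiTensorProduct

variable {𝕜 ι : Type*} [Field 𝕜] {A : ι → Type*} [∀ i, CommRing (A i)] [∀ i, Algebra 𝕜 (A i)]

/-- The elements of `⨂ i, A i` whose `i`-th tensor factors lie in the subspace `W` of `A i`. -/
def inFactor (i : ι) (W : Submodule 𝕜 (A i)) : Submodule 𝕜 (⨂[𝕜] i, A i) :=
  Submodule.span 𝕜 {f | ∃ a : ∀ j, A j, a i ∈ W ∧ tprod 𝕜 a = f}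

section Basic

variable {i : ι} {V W U : Submodule 𝕜 (A i)} {f g : ⨂[𝕜] i, A i}

lemma tprod_mem_inFactor {a : ∀ j, A j} (h : a i ∈ W) : tprod 𝕜 a ∈ inFactor i W :=
  Submodule.subset_span ⟨a, h, rfl⟩

lemma inFactor_mono : Monotone (inFactor (𝕜 := 𝕜) (A := A) i) := fun _ _ h =>
  Submodule.span_mono fun _ ⟨a, ha, hf⟩ => ⟨a, h ha, hf⟩

lemma mul_mem_inFactor (h : V * W ≤ U) (hf : f ∈ inFactor i V) (hg : g ∈ inFactor i W) :
    f * g ∈ inFactor i U := by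
  induction hf, hg using Submodule.span_induction₂ with
  | mem_mem f g hf hg =>
    obtain ⟨a, ha, rfl⟩ := hf
    obtain ⟨b, hb, rfl⟩ := hg
    rw [tprod_mul_tprod]
    exact tprod_mem_inFactor (h (Submodule.mul_mem_mul ha hb))
  | zero_left => simp
  | zero_right => simp
  | add_left _ _ _ _ _ _ h₁ h₂ => rw [add_mul]; exact add_mem h₁ h₂
  | add_right _ _ _ _ _ _ h₁ h₂ => rw [mul_add]; exact add_mem h₁ h₂
  | smul_left r _ _ _ _ h => rw [smul_mul_assoc]; exact Submodule.smul_mem _ _ h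
  | smul_right r _ _ _ _ h => rw [mul_smul_comm]; exact Submodule.smul_mem _ _ h

lemma exists_mem_inFactor {F : ℕ → Submodule 𝕜 (A i)} (hF : Monotone F)
    (hex : ∀ a, ∃ m, a ∈ F m) (f : ⨂[𝕜] i, A i) : ∃ m, f ∈ inFactor i (F m) := by
  induction f using PiTensorProduct.induction_on with
  | smul_tprod r a =>
    obtain ⟨m, hm⟩ := hex (a i)
    exact ⟨m, Submodule.smul_mem _ _ (tprod_mem_inFactor hm)⟩
  | add x y hx hy =>
    obtain ⟨m, hm⟩ := hx
    obtain ⟨k, hk⟩ := hy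
    exact ⟨max m k, add_mem (inFactor_mono (hF (le_max_left m k)) hm)
      (inFactor_mono (hF (le_max_right m k)) hk)⟩

variable [DecidableEq ι]

lemma map_update_id_mem_inFactor (π : A i →ₗ[𝕜] A i) (hπ : ∀ a, π a ∈ W) (f : ⨂[𝕜] i, A i) :
    map (Function.update (fun _ => LinearMap.id) i π) f ∈ inFactor i W := by
  induction f using PiTensorProduct.induction_on with
  | smul_tprod r a =>
    rw [map_smul, map_tprod]
    exact Submodule.smul_mem _ _ (tprod_mem_inFactor (by simpa using hπ _))
  | add x y hx hy => rw [map_add]; exact add_mem hx hy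

lemma map_update_id_eq_self {π : A i →ₗ[𝕜] A i} (hπ : ∀ a ∈ W, π a = a) (hf : f ∈ inFactor i W) :
    map (Function.update (fun _ => LinearMap.id) i π) f = f := by
  induction hf using Submodule.span_induction with
  | mem f hf =>
    obtain ⟨a, ha, rfl⟩ := hf
    rw [map_tprod]
    congr 1
    ext j
    obtain rfl | hj := eq_or_ne j i
    · simp [hπ _ ha]
    · simp [hj]
  | zero => rw [map_zero]
  | add x y _ _ hx hy => rw [map_add, hx, hy]
  | smul r x _ hx => rw [map_smul, hx]

end Basic

lemma exists_projection {V : Type*} [AddCommGroup V] [Module 𝕜 V] (W : Submodule 𝕜 V) :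
    ∃ π : V →ₗ[𝕜] V, (∀ v, π v ∈ W) ∧ ∀ v ∈ W, π v = v := by
  obtain ⟨π, hπ⟩ := W.subtype.exists_leftInverse_of_injective W.ker_subtype
  exact ⟨W.subtype ∘ₗ π, fun v => (π v).2, fun v hv =>
    congrArg Subtype.val (LinearMap.congr_fun hπ ⟨v, hv⟩)⟩

variable [Finite ι]

lemma mem_span_tprod_of_forall_mem_inFactor {W : ∀ i, Submodule 𝕜 (A i)} {f : ⨂[𝕜] i, A i}
    (h : ∀ i, f ∈ inFactor i (W i)) :
    f ∈ Submodule.span 𝕜 {f | ∃ a : ∀ j, A j, (∀ j, a j ∈ W j) ∧ tprod 𝕜 a = f} := by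
  classical
  have := Fintype.ofFinite ι
  choose π hπ hπ' using fun i => exists_projection (W i)
  have hfix (s : Finset ι) : map (fun j => if j ∈ s then π j else LinearMap.id) f = f := by
    induction s using Finset.induction_on with
    | empty => simp
    | insert i s hi ih =>
      conv_rhs => rw [← map_update_id_eq_self (hπ' i) (h i), ← ih]
      rw [← LinearMap.comp_apply, ← map_comp]
      congr 2
      ext j : 1
      obtain rfl | hj := eq_or_ne j i
      · simp [hi]
      · simp [hj]
  rw [← hfix Finset.univ]
  generalize f = f
  induction f using PiTensorProduct.induction_on with
  | smul_tprod r a =>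
    rw [map_smul, map_tprod]
    exact Submodule.smul_mem _ _ (Submodule.subset_span ⟨_, fun j => by simp [hπ], rfl⟩)
  | add x y hx hy => rw [map_add]; exact add_mem hx hy

lemma exists_singleAlgHom_eq [DecidableEq ι] {j : ι} {W : Submodule 𝕜 (A j)} {f : ⨂[𝕜] i, A i}
    (hj : f ∈ inFactor j W) (h : ∀ i ≠ j, f ∈ inFactor i (1 : Submodule 𝕜 (A i))) :
    ∃ a ∈ W, singleAlgHom j a = f := by
  have := Fintype.ofFinite ι
  suffices f ∈ W.map (singleAlgHom (R := 𝕜) (A := A) j).toLinearMap from this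
  refine Submodule.span_le.2 ?_ (mem_span_tprod_of_forall_mem_inFactor
    (W := Function.update 1 j W) fun i => ?_)
  · rintro _ ⟨a, ha, rfl⟩
    have haj : a j ∈ W := by simpa using ha j
    have hscalar (i : ι) : ∃ c : 𝕜, i ≠ j → c • 1 = a i := by
      obtain rfl | hi := eq_or_ne i j
      · simp
      · have := ha i
        rw [Function.update_of_ne hi, Pi.one_apply, Submodule.mem_one] at this
        obtain ⟨c, hc⟩ := this
        exact ⟨c, fun _ => by rw [← hc, Algebra.algebraMap_eq_smul_one]⟩
    choose c hc using hscalar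
    have hprod : a = fun i => Function.update c j 1 i • Pi.mulSingle j (a j) i := by
      ext i
      obtain rfl | hi := eq_or_ne i j
      · simp
      · simp [hi, hc]
    rw [hprod, MultilinearMap.map_smul_univ]
    exact Submodule.smul_mem _ _ ⟨a j, haj, rfl⟩
  · obtain rfl | hi := eq_or_ne i j
    · simpa using hj
    · simpa [hi] using h i hi

end TensorFactors

section Contraction

open PiTensorProduct

variable {𝕜 ι : Type*} [Field 𝕜] {A : ι → Type*} [∀ i, CommRing (A i)] [∀ i, Algebra 𝕜 (A i)]
  {i : ι} {f : ⨂[𝕜] j, A j}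

section Fintype

variable [Fintype ι] [DecidableEq ι]

/-- The contraction `⨂ j, A j → A i` along linear functionals `θ j` on the factors `A j` with
`j ≠ i`; the functional `θ i` plays no role. -/
noncomputable def contract (i : ι) (θ : ∀ j, Module.Dual 𝕜 (A j)) : (⨂[𝕜] j, A j) →ₗ[𝕜] A i :=
  lift ((MultilinearMap.mkPiAlgebra 𝕜 ι (A i)).compLinearMap
    (Function.update (fun j => Algebra.linearMap 𝕜 (A i) ∘ₗ θ j) i LinearMap.id))

lemma contract_tprod (θ : ∀ j, Module.Dual 𝕜 (A j)) (a : ∀ j, A j) :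
    contract i θ (tprod 𝕜 a) = (∏ j ∈ Finset.univ.erase i, θ j (a j)) • a i := by
  rw [contract, lift.tprod, MultilinearMap.compLinearMap_apply, MultilinearMap.mkPiAlgebra_apply,
    ← Finset.prod_erase_mul _ _ (Finset.mem_univ i), Function.update_self, Algebra.smul_def,
    map_prod]
  congr 1
  refine Finset.prod_congr rfl fun j hj => ?_
  rw [Function.update_of_ne (Finset.ne_of_mem_erase hj)]
  rfl

lemma apply_contract (θ : ∀ j, Module.Dual 𝕜 (A j)) (τ : Module.Dual 𝕜 (A i)) :
    τ (contract i θ f) = dualDistrib (tprod 𝕜 (Function.update θ i τ)) f := by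
  induction f using PiTensorProduct.induction_on with
  | smul_tprod r a =>
    rw [map_smul, map_smul, map_smul, contract_tprod, dualDistrib_apply, map_smul,
      ← Finset.prod_erase_mul _ _ (Finset.mem_univ i), Function.update_self,
      smul_eq_mul (_ : 𝕜) (τ _)]
    congr 2
    refine Finset.prod_congr rfl fun j hj => ?_
    rw [Function.update_of_ne (Finset.ne_of_mem_erase hj)]
  | add x y hx hy => simp only [map_add, hx, hy]

lemma contract_mul (p : ∀ j, A j →ₐ[𝕜] 𝕜) (f g : ⨂[𝕜] j, A j) :
    contract i (fun j => (p j).toLinearMap) (f * g) =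
      contract i (fun j => (p j).toLinearMap) f * contract i (fun j => (p j).toLinearMap) g := by
  refine (LinearMap.map_mul_iff _).2 ?_ f g
  ext a b
  simp [contract_tprod, Finset.prod_mul_distrib, smul_smul, mul_comm (∏ j ∈ _, p j (b j))]

lemma contract_one (p : ∀ j, A j →ₐ[𝕜] 𝕜) : contract i (fun j => (p j).toLinearMap) 1 = 1 := by
  simp [PiTensorProduct.one_def, contract_tprod]

lemma contract_pow (p : ∀ j, A j →ₐ[𝕜] 𝕜) (f : ⨂[𝕜] j, A j) (N : ℕ) :
    contract i (fun j => (p j).toLinearMap) (f ^ N) =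
      contract i (fun j => (p j).toLinearMap) f ^ N := by
  induction N with
  | zero => rw [pow_zero, pow_zero, contract_one]
  | succ N ih => rw [pow_succ, pow_succ, contract_mul, ih]

end Fintype

lemma singleAlgHom_injective [Finite ι] [DecidableEq ι] [∀ j, Nontrivial (A j)] (i : ι) :
    Function.Injective (singleAlgHom (R := 𝕜) (A := A) i) := by
  have := Fintype.ofFinite ι
  choose θ hθ using fun j => Module.Projective.exists_dual_eq_one 𝕜 (one_ne_zero (α := A j))
  refine Function.LeftInverse.injective (g := contract i θ) fun a => ?_
  rw [singleAlgHom_apply, contract_tprod, MonoidHom.mulSingle_apply, Pi.mulSingle_eq_same,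
    Finset.prod_eq_one fun j hj => ?_, one_smul]
  rw [Pi.mulSingle_eq_of_ne (Finset.ne_of_mem_erase hj), hθ]

lemma eq_zero_of_forall_dualDistrib_eq_zero [Finite ι] {S : ∀ j, Set (Module.Dual 𝕜 (A j))}
    (hS : ∀ j (a : A j), (∀ θ ∈ S j, θ a = 0) → a = 0)
    (h : ∀ θ : ∀ j, Module.Dual 𝕜 (A j), (∀ j, θ j ∈ S j) → dualDistrib (tprod 𝕜 θ) f = 0) :
    f = 0 := by
  classical
  have := Fintype.ofFinite ι
  have hall (s : Finset ι) : ∀ θ : ∀ j, Module.Dual 𝕜 (A j), (∀ j ∉ s, θ j ∈ S j) →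
      dualDistrib (tprod 𝕜 θ) f = 0 := by
    induction s using Finset.induction_on with
    | empty => exact fun θ hθ => h θ fun j => hθ j (Finset.notMem_empty j)
    | insert i s hi ih =>
      intro θ hθ
      rw [← Function.update_eq_self i θ, ← apply_contract]
      rw [hS i (contract i θ f) fun τ hτ => ?_, map_zero]
      rw [apply_contract]
      refine ih _ fun j hj => ?_
      obtain rfl | hji := eq_or_ne j i
      · rwa [Function.update_self]
      · rw [Function.update_of_ne hji]
        exact hθ j (by simp [hji, hj])
  let b := fun j => Module.Basis.ofVectorSpace 𝕜 (A j)
  have hcoord (p) : (Basis.piTensorProduct b).coord p =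
      dualDistrib (tprod 𝕜 fun j => (b j).coord (p j)) := by
    ext a
    simp
  exact (Basis.piTensorProduct b).ext_elem fun p => by
    rw [map_zero, Finsupp.zero_apply, ← Module.Basis.coord_apply, hcoord]
    exact hall Finset.univ _ (by simp)

lemma mem_inFactor_iff [Fintype ι] [DecidableEq ι] {W : Submodule 𝕜 (A i)}
    (hsep : ∀ j (a : A j), (∀ p : A j →ₐ[𝕜] 𝕜, p a = 0) → a = 0) :
    f ∈ inFactor i W ↔
      ∀ p : ∀ j, A j →ₐ[𝕜] 𝕜, contract i (fun j => (p j).toLinearMap) f ∈ W := by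
  refine ⟨fun hf p => ?_, fun hf => ?_⟩
  · refine Submodule.span_le (p := W.comap (contract i _)).2 ?_ hf
    rintro _ ⟨a, ha, rfl⟩
    rw [SetLike.mem_coe, Submodule.mem_comap, contract_tprod]
    exact W.smul_mem _ ha
  obtain ⟨π, hπ, hπ'⟩ := exists_projection W
  have hcontract (θ : ∀ j, Module.Dual 𝕜 (A j)) :
      contract i θ ∘ₗ map (Function.update (fun _ => LinearMap.id) i π) = π ∘ₗ contract i θ := by
    ext a
    simp only [LinearMap.compMultilinearMap_apply, LinearMap.comp_apply, map_tprod, contract_tprod,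
      map_smul, Function.update_self]
    congr 1
    refine Finset.prod_congr rfl fun j hj => ?_
    rw [Function.update_of_ne (Finset.ne_of_mem_erase hj), LinearMap.id_apply]
  suffices map (Function.update (fun _ => LinearMap.id) i π) f - f = 0 by
    rw [← sub_eq_zero.1 this]
    exact map_update_id_mem_inFactor π hπ f
  refine eq_zero_of_forall_dualDistrib_eq_zero
    (S := fun j => Set.range (AlgHom.toLinearMap (R := 𝕜) (A := A j))) (fun j a ha => hsep j a
      fun p => ha _ ⟨p, rfl⟩) fun θ hθ => ?_
  choose p hp using hθ
  obtain rfl : (fun j => (p j).toLinearMap) = θ := funext hp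
  rw [← Function.update_eq_self i fun j => (p j).toLinearMap, ← apply_contract, map_sub,
    ← LinearMap.comp_apply, hcontract, LinearMap.comp_apply, hπ' _ (hf p), sub_self, map_zero]

end Contraction

namespace PoissonStructure

section

variable {R A : Type*} [CommRing R] [CommRing A] [Algebra R A] (P : PoissonStructure R A)

/-- The Poisson bracket as a bilinear map. -/
def bracketₗ : A →ₗ[R] A →ₗ[R] A :=
  LinearMap.mk₂ R P.bracket P.add_left P.smul_left
    (fun a b c => by rw [P.antisymm, P.add_left, neg_add, ← P.antisymm, ← P.antisymm])
    (fun r a b => by rw [P.antisymm, P.smul_left, ← smul_neg, ← P.antisymm])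

lemma bracket_one_right (a : A) : P.bracket a 1 = 0 := by
  simpa using P.leibniz a 1 1

end

open PiTensorProduct

variable {𝕜 : Type*} [Field 𝕜] {d : ℕ} {A : Fin d → Type*} [∀ i, CommRing (A i)]
  [∀ i, Algebra 𝕜 (A i)] {P : ∀ i, PoissonStructure 𝕜 (A i)}
  {PT : PoissonStructure 𝕜 (⨂[𝕜] i, A i)} {i j : Fin d}

lemma bracket_mem_inFactor (hPT : IsPiTensorBracket P PT) {V W U : Submodule 𝕜 (A i)}
    (hmul : V * W ≤ U) (hbracket : ∀ a ∈ V, ∀ b ∈ W, (P i).bracket a b ∈ U)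
    {f g : ⨂[𝕜] i, A i} (hf : f ∈ inFactor i V) (hg : g ∈ inFactor i W) :
    PT.bracket f g ∈ inFactor i U := by
  suffices Submodule.map₂ PT.bracketₗ (inFactor i V) (inFactor i W) ≤ inFactor i U from
    this (Submodule.apply_mem_map₂ _ hf hg)
  rw [inFactor, inFactor, Submodule.map₂_span_span, Submodule.span_le]
  rintro _ ⟨_, ⟨a, ha, rfl⟩, _, ⟨b, hb, rfl⟩, rfl⟩
  change PT.bracket (tprod 𝕜 a) (tprod 𝕜 b) ∈ _
  rw [hPT a b]
  refine sum_mem fun k _ => tprod_mem_inFactor ?_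
  obtain rfl | hk := eq_or_ne i k
  · rw [Function.update_self]
    exact hbracket _ ha _ hb
  · rw [Function.update_of_ne hk]
    exact hmul (Submodule.mul_mem_mul ha hb)

lemma bracket_tprod_singleAlgHom (hPT : IsPiTensorBracket P PT) (c : ∀ j, A j) (a : A i) :
    PT.bracket (tprod 𝕜 c) (singleAlgHom i a) =
      tprod 𝕜 (Function.update c i ((P i).bracket (c i) a)) := by
  rw [singleAlgHom_apply, MonoidHom.mulSingle_apply, hPT, Finset.sum_eq_single i]
  · congr 1
    ext j
    obtain rfl | hj := eq_or_ne j i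
    · simp
    · simp [hj]
  · intro k _ hk
    refine (PiTensorProduct.tprod 𝕜).map_coord_zero k ?_
    rw [Function.update_self, Pi.mulSingle_eq_of_ne hk, bracket_one_right]
  · simp

lemma bracket_singleAlgHom (hPT : IsPiTensorBracket P PT) (a b : A i) :
    PT.bracket (singleAlgHom i a) (singleAlgHom i b) = singleAlgHom i ((P i).bracket a b) := by
  rw [singleAlgHom_apply, bracket_tprod_singleAlgHom hPT]
  simp [Pi.mulSingle]

lemma bracket_singleAlgHom_of_ne (hPT : IsPiTensorBracket P PT) (h : i ≠ j) (a : A i) (b : A j) :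
    PT.bracket (singleAlgHom i a) (singleAlgHom j b) = 0 := by
  rw [singleAlgHom_apply, bracket_tprod_singleAlgHom hPT]
  refine (PiTensorProduct.tprod 𝕜).map_coord_zero j ?_
  rw [Function.update_self, MonoidHom.mulSingle_apply, Pi.mulSingle_eq_of_ne h.symm,
    (P j).antisymm, bracket_one_right, neg_zero]

lemma contract_bracket_singleAlgHom (hPT : IsPiTensorBracket P PT)
    (θ : ∀ j, Module.Dual 𝕜 (A j)) (f : ⨂[𝕜] i, A i) (a : A i) :
    contract i θ (PT.bracket f (singleAlgHom i a)) = (P i).bracket (contract i θ f) a := by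
  induction f using PiTensorProduct.induction_on with
  | smul_tprod r c =>
    rw [PT.smul_left, bracket_tprod_singleAlgHom hPT, map_smul, map_smul, contract_tprod,
      contract_tprod, (P i).smul_left, (P i).smul_left, Function.update_self]
    congr 2
    refine Finset.prod_congr rfl fun j hj => ?_
    rw [Function.update_of_ne (Finset.ne_of_mem_erase hj)]
  | add x y hx hy => rw [PT.add_left, map_add, hx, hy, map_add, (P i).add_left]

end PoissonStructure

lemma aeval_mem_of_totalDegree_le {R B σ : Type*} [CommSemiring R] [CommSemiring B] [Algebra R B]
    {F : ℕ → Submodule R B} [SetLike.GradedMonoid F] (hF : Monotone F) {x : σ → B} {m : ℕ}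
    (hx : ∀ l, x l ∈ F m) {p : MvPolynomial σ R} {k : ℕ} (hp : p.totalDegree ≤ k) :
    aeval x p ∈ F (k * m) := by
  rw [aeval_def, eval₂_eq]
  refine Submodule.sum_mem _ fun s hs => ?_
  rw [← Algebra.smul_def]
  have hmonomial := SetLike.prod_pow_mem_graded F (fun _ => m) x (F := s.support) s fun l _ => hx l
  rw [← Finset.sum_smul, smul_eq_mul] at hmonomial
  have hle : (s.sum fun _ e => e) * m ≤ k * m :=
    Nat.mul_le_mul_right m ((le_totalDegree hs).trans hp)
  exact Submodule.smul_mem _ _ (hF hle hmonomial)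

section SurfaceProduct

open PiTensorProduct

variable {𝕜 : Type*} [Field 𝕜] {d : ℕ} {Ω : Fin d → MvPolynomial (Fin 3) 𝕜} {n : Fin d → ℕ}
  {ξ : Fin d → 𝕜} {i j : Fin d}

variable (Ω ξ) in
/-- The filtration of `⨂ i, P_{Ω i - ξ i}` by the degree in the `i`-th tensor factor. -/
noncomputable def factorFiltration (i : Fin d) (m : ℕ) :
    Submodule 𝕜 (⨂[𝕜] i, PQuot 𝕜 (Ω i) (ξ i)) :=
  inFactor i (PQuot.filtration (Ω i) (ξ i) m)

lemma factorFiltration_mono : Monotone (factorFiltration Ω ξ i) := fun _ _ h =>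
  inFactor_mono (PQuot.filtration_mono h)

instance : SetLike.GradedMonoid (factorFiltration Ω ξ i) where
  one_mem := tprod_mem_inFactor (PQuot.mem_filtration_iff.2 ⟨1, by simp, map_one _⟩)
  mul_mem _ _ _ _ := mul_mem_inFactor (Submodule.mul_le.2 fun _ ha _ hb =>
    PQuot.mul_mem_filtration ha hb)

lemma exists_forall_mem_factorFiltration {κ : Type*} [Finite κ] (i : Fin d)
    (f : κ → ⨂[𝕜] i, PQuot 𝕜 (Ω i) (ξ i)) : ∃ m, ∀ l, f l ∈ factorFiltration Ω ξ i m := by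
  choose m hm using fun l =>
    exists_mem_inFactor (A := fun i => PQuot 𝕜 (Ω i) (ξ i)) (i := i) PQuot.filtration_mono
      PQuot.exists_mem_filtration (f l)
  obtain ⟨M, hM⟩ := Finite.exists_le m
  exact ⟨M, fun l => factorFiltration_mono (hM l) (hm l)⟩

variable (Ω ξ) in
/-- The inclusion of the `j`-th factor, composed with the projection `𝕜[x,y,z] → P_{Ω j - ξ j}`. -/
noncomputable def factorHom (j : Fin d) :
    MvPolynomial (Fin 3) 𝕜 →ₐ[𝕜] ⨂[𝕜] i, PQuot 𝕜 (Ω i) (ξ i) :=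
  (singleAlgHom j).comp (PQuot.mkₐ (Ω j) (ξ j))

variable [IsAlgClosed 𝕜] (hΩ : ∀ i, IsISPotential (Ω i) (n i))
include hΩ

lemma mem_factorFiltration_iff {f : ⨂[𝕜] i, PQuot 𝕜 (Ω i) (ξ i)} {m : ℕ} :
    f ∈ factorFiltration Ω ξ i m ↔ ∀ p : ∀ j, PQuot 𝕜 (Ω j) (ξ j) →ₐ[𝕜] 𝕜,
      contract i (fun j => (p j).toLinearMap) f ∈ PQuot.filtration (Ω i) (ξ i) m :=
  mem_inFactor_iff fun j _ h =>
    have := PQuot.isReduced (hΩ j) (ξ j)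
    have := PQuot.finiteType (Ω j) (ξ j)
    eq_zero_of_forall_algHom_apply_eq_zero h

lemma mem_factorFiltration_of_pow_mem {f : ⨂[𝕜] i, PQuot 𝕜 (Ω i) (ξ i)} {m N M : ℕ}
    (hf : f ∈ factorFiltration Ω ξ i (m + 1)) (hM : M < N * (m + 1))
    (hN : f ^ N ∈ factorFiltration Ω ξ i M) : f ∈ factorFiltration Ω ξ i m := by
  rw [mem_factorFiltration_iff hΩ] at *
  exact fun p => PQuot.mem_filtration_of_pow_mem_filtration (hΩ i) (hf p) hM
    (contract_pow p f N ▸ hN p)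

variable {P : ∀ i, PoissonStructure 𝕜 (PQuot 𝕜 (Ω i) (ξ i))}
  {PT : PoissonStructure 𝕜 (⨂[𝕜] i, PQuot 𝕜 (Ω i) (ξ i))}

omit [IsAlgClosed 𝕜] in
lemma bracket_mem_factorFiltration (hP : ∀ i, IsInducedBracket (Ω i) (ξ i) (P i))
    (hPT : IsPiTensorBracket P PT) {f g : ⨂[𝕜] i, PQuot 𝕜 (Ω i) (ξ i)} {k m : ℕ}
    (hf : f ∈ factorFiltration Ω ξ i k) (hg : g ∈ factorFiltration Ω ξ i m) :
    PT.bracket f g ∈ factorFiltration Ω ξ i (k + m + (n i - 3)) :=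
  PoissonStructure.bracket_mem_inFactor hPT
    (Submodule.mul_le.2 fun _ ha _ hb =>
      PQuot.filtration_mono (Nat.le_add_right _ _) (PQuot.mul_mem_filtration ha hb))
    (fun _ ha _ hb => PQuot.bracket_mem_filtration (hΩ i).isHomogeneous (hP i) ha hb) hf hg

omit hΩ [IsAlgClosed 𝕜] in
lemma bracket_factorHom (hP : ∀ i, IsInducedBracket (Ω i) (ξ i) (P i))
    (hPT : IsPiTensorBracket P PT) (f g : MvPolynomial (Fin 3) 𝕜) :
    PT.bracket (factorHom Ω ξ j f) (factorHom Ω ξ j g) =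
      factorHom Ω ξ j (jacBracket (Ω j) f g) := by
  simp only [factorHom, AlgHom.comp_apply]
  rw [PoissonStructure.bracket_singleAlgHom hPT, PQuot.bracket_mkₐ (hP j)]

lemma mem_factorFiltration_of_bracket_eq_zero [CharZero 𝕜]
    (hP : ∀ i, IsInducedBracket (Ω i) (ξ i) (P i)) (hPT : IsPiTensorBracket P PT) (hn : 3 ≤ n i)
    {f : ⨂[𝕜] i, PQuot 𝕜 (Ω i) (ξ i)} (h : ∀ l, PT.bracket f (factorHom Ω ξ i (X l)) = 0) :
    f ∈ factorFiltration Ω ξ i 0 := by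
  obtain ⟨M, hM⟩ := exists_forall_mem_factorFiltration i fun _ : Unit => f
  refine Nat.decreasingInduction' (fun m _ _ hm => ?_) (Nat.zero_le M) (hM ())
  rw [mem_factorFiltration_iff hΩ] at hm ⊢
  refine fun p => PQuot.mem_filtration_of_bracket_X_eq_zero (hΩ i) hn (hP i) (hm p) fun l => ?_
  rw [← PoissonStructure.contract_bracket_singleAlgHom hPT]
  exact (congrArg _ (h l)).trans (map_zero _)

section Automorphism

variable (hP : ∀ i, IsInducedBracket (Ω i) (ξ i) (P i)) (hPT : IsPiTensorBracket P PT)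
  {φ : (⨂[𝕜] i, PQuot 𝕜 (Ω i) (ξ i)) →ₐ[𝕜] ⨂[𝕜] i, PQuot 𝕜 (Ω i) (ξ i)}
  (hφ : IsPoissonHom PT PT φ)
include hP hPT hφ

omit [IsAlgClosed 𝕜] hΩ in
lemma map_factorHom_pderiv (l : Fin 3) : φ (factorHom Ω ξ j (pderiv l (Ω j))) =
    PT.bracket (φ (factorHom Ω ξ j (X (l + 1)))) (φ (factorHom Ω ξ j (X (l + 2)))) := by
  rw [← jacBracket_X_X, ← bracket_factorHom hP hPT, hφ]

lemma map_factorHom_X_mem_of_lt {m : ℕ} (hm : n i - 3 < (n j - 3) * (m + 1))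
    (h : ∀ l, φ (factorHom Ω ξ j (X l)) ∈ factorFiltration Ω ξ i (m + 1)) (u : Fin 3) :
    φ (factorHom Ω ξ j (X u)) ∈ factorFiltration Ω ξ i m := by
  obtain ⟨k, c, hc, hcert⟩ := (hΩ j).exists_X_pow_eq_sum_mul_pderiv u
  have hgrad (l : Fin 3) : φ (factorHom Ω ξ j (pderiv l (Ω j))) ∈
      factorFiltration Ω ξ i (m + 1 + (m + 1) + (n i - 3)) :=
    map_factorHom_pderiv hP hPT hφ l ▸ bracket_mem_factorFiltration hΩ hP hPT (h _) (h _)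
  have hcoeff (l : Fin 3) :
      φ (factorHom Ω ξ j (c l)) ∈ factorFiltration Ω ξ i (k * (m + 1)) := by
    rw [← AlgHom.comp_apply, aeval_unique (φ.comp _)]
    exact aeval_mem_of_totalDegree_le factorFiltration_mono h (hc l).totalDegree_le
  refine mem_factorFiltration_of_pow_mem hΩ (N := k + (n j - 1)) (h u)
    (M := k * (m + 1) + (m + 1 + (m + 1) + (n i - 3))) ?_ ?_
  · obtain ⟨w, hw⟩ : ∃ w, n j = w + 3 := ⟨n j - 3, by
      have := Nat.pos_of_mul_pos_right (Nat.zero_lt_of_lt hm)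
      omega⟩
    rw [hw, Nat.add_sub_cancel] at hm
    rw [hw, Nat.add_sub_assoc (by norm_num)]
    linarith
  · rw [← map_pow, ← map_pow, hcert, map_sum, map_sum]
    refine Submodule.sum_mem _ fun l _ => ?_
    rw [map_mul, map_mul]
    exact SetLike.mul_mem_graded (hcoeff l) (hgrad l)

lemma map_factorHom_X_mem {m : ℕ} (hm : n i - 3 < (n j - 3) * (m + 1)) (u : Fin 3) :
    φ (factorHom Ω ξ j (X u)) ∈ factorFiltration Ω ξ i m := by
  obtain ⟨M, hM⟩ := exists_forall_mem_factorFiltration i fun l => φ (factorHom Ω ξ j (X l))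
  refine Nat.decreasingInduction' (m := m) (n := max m M)
    (P := fun D => ∀ l, φ (factorHom Ω ξ j (X l)) ∈ factorFiltration Ω ξ i D)
    (fun D _ hD h => map_factorHom_X_mem_of_lt hΩ hP hPT hφ ?_ h) (le_max_left _ _)
    (fun l => factorFiltration_mono (le_max_right _ _) (hM l)) u
  exact hm.trans_le (Nat.mul_le_mul_left _ (Nat.succ_le_succ hD))

end Automorphism

-- For `n i < n j` the degree bound already gives degree `0` in the `i`-th factor; for
-- `n j < n i` the image of the `j`-th factor commutes with the `i`-th factor, which by induction
-- is preserved by the inverse automorphism.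
lemma exists_factorHom_eq_map_factorHom_X [CharZero 𝕜] (hn : ∀ i, 4 ≤ n i)
    (hinj : Function.Injective n)
    (hP : ∀ i, IsInducedBracket (Ω i) (ξ i) (P i)) (hPT : IsPiTensorBracket P PT) (j : Fin d)
    {φ : (⨂[𝕜] i, PQuot 𝕜 (Ω i) (ξ i)) ≃ₐ[𝕜] ⨂[𝕜] i, PQuot 𝕜 (Ω i) (ξ i)}
    (hφ : IsPoissonHom PT PT φ.toAlgHom) (u : Fin 3) :
    ∃ L : MvPolynomial (Fin 3) 𝕜, L.totalDegree ≤ 1 ∧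
      factorHom Ω ξ j L = φ (factorHom Ω ξ j (X u)) := by
  have hwf : WellFounded fun i j => n j < n i :=
    have : IsTrans (Fin d) fun i j => n j < n i := ⟨fun _ _ _ h h' => h'.trans h⟩
    have : Std.Irrefl fun i j : Fin d => n j < n i := ⟨fun _ => lt_irrefl _⟩
    Finite.wellFounded_of_trans_of_irrefl _
  induction j using hwf.induction generalizing φ u with
  | _ j ih =>
  have hsymm : IsPoissonHom PT PT φ.symm.toAlgHom := fun a b => φ.injective <| by
    have := hφ (φ.symm a) (φ.symm b)
    simp_all
  have hzero (i : Fin d) (hij : i ≠ j) : φ (factorHom Ω ξ j (X u)) ∈ factorFiltration Ω ξ i 0 := by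
    have := hn i
    obtain hlt | hgt := lt_or_gt_of_ne (hinj.ne hij)
    · exact map_factorHom_X_mem hΩ hP hPT hφ (by omega) u
    refine mem_factorFiltration_of_bracket_eq_zero hΩ hP hPT (by omega) fun l => ?_
    obtain ⟨L, -, hL⟩ := ih i hgt hsymm l
    have hpre : φ (factorHom Ω ξ i L) = factorHom Ω ξ i (X l) := by
      rw [hL, φ.apply_symm_apply]
    rw [← hpre]
    refine (hφ _ _).symm.trans ?_
    rw [factorHom, factorHom, AlgHom.comp_apply, AlgHom.comp_apply,
      PoissonStructure.bracket_singleAlgHom_of_ne hPT hij.symm, map_zero]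
  have hone : φ (factorHom Ω ξ j (X u)) ∈ factorFiltration Ω ξ j 1 :=
    map_factorHom_X_mem hΩ hP hPT hφ (by have := hn j; omega) u
  obtain ⟨a, ha, hau⟩ := exists_singleAlgHom_eq hone
    fun i hi => PQuot.filtration_zero (Ω i) (ξ i) ▸ hzero i hi
  obtain ⟨L, hL, rfl⟩ := PQuot.mem_filtration_iff.1 ha
  exact ⟨L, hL, hau⟩

end SurfaceProduct

section PartialDerivatives

lemma derivation_aeval {R A N σ : Type*} [Fintype σ] [CommSemiring R] [CommSemiring A] [Algebra R A]
    [AddCommMonoid N] [Module A N] [Module R N] (D : Derivation R A N)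
    (x : σ → A) (p : MvPolynomial σ R) :
    D (aeval x p) = ∑ l, aeval x (pderiv l p) • D (x l) := by
  classical
  induction p using MvPolynomial.induction_on with
  | C a => simp [← algebraMap_eq]
  | add p q hp hq => simp only [map_add, hp, hq, add_smul, Finset.sum_add_distrib]
  | mul_X p m hp =>
    simp only [map_mul, aeval_X, Derivation.leibniz, hp, Finset.smul_sum, smul_eq_mul, map_add,
      add_smul, Finset.sum_add_distrib, mul_smul]
    congr 1
    rw [Finset.sum_eq_single m (fun l _ hl => by rw [pderiv_X_of_ne hl.symm]; simp) (by simp)]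
    simp

lemma pderiv_pderiv_comm {R σ : Type*} [CommSemiring R] (i j : σ) (p : MvPolynomial σ R) :
    pderiv i (pderiv j p) = pderiv j (pderiv i p) := by
  classical
  obtain rfl | hij := eq_or_ne i j
  · rfl
  ext m
  simp only [coeff_pderiv, Finsupp.add_apply, Finsupp.single_eq_of_ne hij,
    Finsupp.single_eq_of_ne hij.symm, add_zero]
  rw [add_right_comm, mul_right_comm]

lemma eq_C_of_forall_pderiv_eq_zero {R σ : Type*} [CommRing R] [NoZeroDivisors R] [CharZero R]
    {p : MvPolynomial σ R} (h : ∀ i, pderiv i p = 0) : p = C (coeff 0 p) := by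
  classical
  ext m
  rw [coeff_C]
  split_ifs with hm
  · rw [hm]
  · obtain ⟨i, hi⟩ := Finsupp.ne_iff.1 (Ne.symm hm)
    obtain ⟨k, hk⟩ := Nat.exists_eq_succ_of_ne_zero hi
    have hcoeff := coeff_pderiv (i := i) p (m - Finsupp.single i 1)
    rw [h, coeff_zero, tsub_add_cancel_of_le (Finsupp.single_le_iff.2 (by omega))] at hcoeff
    exact (mul_eq_zero.1 hcoeff.symm).resolve_right (Nat.cast_add_one_ne_zero _)

end PartialDerivatives

section AffineForms

variable {R σ : Type*} [CommRing R] [Fintype σ]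

/-- The coordinates of the affine map `v ↦ M v + b`, as polynomials of degree at most `1`. -/
noncomputable def affineForm (M : Matrix σ σ R) (b : σ → R) (l : σ) : MvPolynomial σ R :=
  ∑ m, C (M l m) * X m + C (b l)

variable (M : Matrix σ σ R) (b : σ → R)

lemma pderiv_affineForm (k l : σ) : pderiv k (affineForm M b l) = C (M l k) := by
  classical
  rw [affineForm, map_add, pderiv_C, add_zero, map_sum, Finset.sum_eq_single k]
  · simp
  · exact fun m _ hm => by simp [pderiv_X_of_ne hm]
  · simp

lemma aeval_affineForm {A : Type*} [CommRing A] [Algebra R A] (x : σ → A) (l : σ) :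
    aeval x (affineForm M b l) = ∑ m, algebraMap R A (M l m) * x m + algebraMap R A (b l) := by
  simp [affineForm]

lemma totalDegree_affineForm_le (l : σ) : (affineForm M b l).totalDegree ≤ 1 := by
  refine (totalDegree_add _ _).trans (max_le (totalDegree_finsetSum_le fun m _ => ?_) (by simp))
  refine (totalDegree_mul _ _).trans ?_
  rw [totalDegree_C, zero_add]
  exact totalDegree_monomial_le _ _ |>.trans (by simp)

lemma exists_eq_affineForm {L : σ → MvPolynomial σ R} (h : ∀ l, (L l).totalDegree ≤ 1) :
    ∃ M b, L = affineForm M b := by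
  classical
  refine ⟨.of fun l m => coeff (Finsupp.single m 1) (L l), fun l => coeff 0 (L l), ?_⟩
  ext l s
  simp only [affineForm, Matrix.of_apply, coeff_add, coeff_sum, coeff_C_mul, coeff_X, coeff_C]
  obtain rfl | hs := eq_or_ne s 0
  · simp
  obtain ⟨k, hk⟩ := Finsupp.ne_iff.1 hs
  obtain ⟨t, rfl⟩ := exists_add_of_le (Finsupp.single_le_iff.2 (Nat.one_le_iff_ne_zero.2 hk))
  obtain rfl | ht := eq_or_ne t 0
  · simp [Finsupp.single_left_inj, eq_comm]
  have hdeg : 1 < (Finsupp.single k 1 + t).degree := by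
    have := mt (Finsupp.degree_eq_zero_iff t).1 ht
    rw [map_add, Finsupp.degree_single]
    omega
  have hX (m : σ) : Finsupp.single m 1 ≠ Finsupp.single k 1 + t := fun h => by
    simp [← h] at hdeg
  simp [coeff_eq_zero_of_totalDegree_lt_degree ((h l).trans_lt hdeg), hX, hs.symm]

lemma totalDegree_aeval_affineForm_le {p : MvPolynomial σ R} {k : ℕ} (hp : p.totalDegree ≤ k) :
    (aeval (affineForm M b) p).totalDegree ≤ k := by
  have : SetLike.GradedMonoid (restrictTotalDegree σ R) :=
    { one_mem := by simp [mem_restrictTotalDegree]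
      mul_mem := fun i j f g hf hg => by
        rw [mem_restrictTotalDegree] at *
        exact (totalDegree_mul f g).trans (add_le_add hf hg) }
  have hmono : Monotone (restrictTotalDegree σ R) := fun i j hij f hf => by
    rw [mem_restrictTotalDegree] at *
    exact hf.trans hij
  rw [← mem_restrictTotalDegree, ← mul_one k]
  refine aeval_mem_of_totalDegree_le hmono (fun l => ?_) hp
  exact (mem_restrictTotalDegree ..).2 (totalDegree_affineForm_le M b l)

open Matrix in
lemma eval_aeval_affineForm (v : σ → R) (p : MvPolynomial σ R) :
    eval v (aeval (affineForm M b) p) = eval (M *ᵥ v + b) p := by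
  rw [← coe_aeval_eq_eval, ← coe_aeval_eq_eval, RingHom.coe_coe, RingHom.coe_coe,
    ← AlgHom.comp_apply, comp_aeval]
  congr 2
  ext l
  simp [aeval_affineForm, Matrix.mulVec, dotProduct]

lemma jacBracket_affineForm (Ω : MvPolynomial (Fin 3) R) (M : Matrix (Fin 3) (Fin 3) R)
    (b : Fin 3 → R) (l : Fin 3) :
    jacBracket Ω (affineForm M b (l + 1)) (affineForm M b (l + 2)) =
      ∑ k, C (M.adjugate k l) * pderiv k Ω := by
  rw [jacBracket, Matrix.det_fin_three]
  simp only [pderiv_affineForm, Fin.sum_univ_three, Matrix.adjugate_fin_three]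
  fin_cases l <;> simp <;> ring

end AffineForms

lemma sum_mul_eval_pderiv {R σ : Type*} [CommSemiring R] [Fintype σ] {p : MvPolynomial σ R} {n : ℕ}
    (hp : p.IsHomogeneous n) (v : σ → R) :
    ∑ l, v l * eval v (pderiv l p) = n * eval v p := by
  simpa [nsmul_eq_mul] using congrArg (eval v) hp.sum_X_mul_pderiv

lemma IsISPotential.eq_zero_of_sum_C_mul_pderiv_eq_zero {𝕜 : Type*} [Field 𝕜] [CharZero 𝕜]
    {Ω : MvPolynomial (Fin 3) 𝕜} {n : ℕ} (hΩ : IsISPotential Ω n) (hn : 2 ≤ n) {w : Fin 3 → 𝕜}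
    (h : ∑ l, C (w l) * pderiv l Ω = 0) : w = 0 := by
  refine hΩ.eq_zero_of_forall_eval_pderiv_eq_zero fun m => ?_
  have hm : ∑ l, w l * eval w (pderiv l (pderiv m Ω)) = 0 := by
    simpa [pderiv_C_mul, pderiv_pderiv_comm m] using congrArg (fun p => eval w (pderiv m p)) h
  rw [sum_mul_eval_pderiv hΩ.isHomogeneous.pderiv] at hm
  exact (mul_eq_zero.1 hm).resolve_left (Nat.cast_ne_zero.2 (by omega))

/-- The affine map `v ↦ M v + b` of 3-space is invertible and induces a Poisson automorphism
of `A_Ω`; it suffices to test the brackets of the coordinates. -/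
structure IsAffineSymmetry {R : Type*} [CommRing R] (Ω : MvPolynomial (Fin 3) R)
    (M : Matrix (Fin 3) (Fin 3) R) (b : Fin 3 → R) : Prop where
  isUnit_det : IsUnit M.det
  jacBracket_affineForm_eq_aeval (l : Fin 3) :
    jacBracket Ω (affineForm M b (l + 1)) (affineForm M b (l + 2)) =
      aeval (affineForm M b) (pderiv l Ω)

namespace IsAffineSymmetry

variable {R : Type*} [CommRing R] {Ω : MvPolynomial (Fin 3) R} {M : Matrix (Fin 3) (Fin 3) R}
  {b : Fin 3 → R}

lemma aeval_pderiv (h : IsAffineSymmetry Ω M b) (l : Fin 3) :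
    aeval (affineForm M b) (pderiv l Ω) = ∑ k, C (M.adjugate k l) * pderiv k Ω := by
  rw [← h.jacBracket_affineForm_eq_aeval, jacBracket_affineForm]

lemma aeval_self [NoZeroDivisors R] [CharZero R] (h : IsAffineSymmetry Ω M b) {n : ℕ}
    (hΩ : Ω.IsHomogeneous n) (hn : n ≠ 0) :
    aeval (affineForm M b) Ω = C M.det * Ω + C (eval b Ω) := by
  have hconst : ∀ k, pderiv k (aeval (affineForm M b) Ω - C M.det * Ω) = 0 := fun k => by
    rw [map_sub, derivation_aeval, pderiv_C_mul, sub_eq_zero]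
    calc ∑ l, aeval (affineForm M b) (pderiv l Ω) • pderiv k (affineForm M b l)
        = ∑ m, C ((M.adjugate * M) m k) * pderiv m Ω := by
          simp only [h.aeval_pderiv, pderiv_affineForm, smul_eq_mul, Matrix.mul_apply, map_sum,
            map_mul, Finset.sum_mul]
          rw [Finset.sum_comm]
          exact Finset.sum_congr rfl fun _ _ => Finset.sum_congr rfl fun _ _ => by ring
      _ = C M.det * pderiv k Ω := by
          simp [Matrix.adjugate_mul, Matrix.one_apply, apply_ite C]
  have hval : coeff 0 (aeval (affineForm M b) Ω - C M.det * Ω) = eval b Ω := by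
    have hzero : eval 0 Ω = 0 := by
      rw [eval_zero, constantCoeff_eq, hΩ.coeff_eq_zero (by simpa using hn.symm)]
    rw [← constantCoeff_eq, ← eval_zero, map_sub, eval_aeval_affineForm, map_mul, hzero, mul_zero,
      sub_zero, Matrix.mulVec_zero, zero_add]
  rw [← sub_eq_iff_eq_add', eq_C_of_forall_pderiv_eq_zero hconst, hval]

end IsAffineSymmetry

lemma IsISPotential.det_ne_zero_of_jacBracket_affineForm_eq {𝕜 : Type*} [Field 𝕜] [CharZero 𝕜]
    {Ω : MvPolynomial (Fin 3) 𝕜} {n : ℕ} (hΩ : IsISPotential Ω n) (hn : 2 ≤ n)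
    {M : Matrix (Fin 3) (Fin 3) 𝕜} {b : Fin 3 → 𝕜}
    (h : ∀ l, jacBracket Ω (affineForm M b (l + 1)) (affineForm M b (l + 2)) =
      aeval (affineForm M b) (pderiv l Ω))
    (hinj : ∀ f : MvPolynomial (Fin 3) 𝕜, f.totalDegree < n →
      aeval (affineForm M b) f = 0 → f = 0) :
    M.det ≠ 0 := by
  intro hdet
  obtain ⟨w, hw, hMw⟩ : ∃ w ≠ 0, M.adjugate.mulVec w = 0 :=
    Matrix.exists_mulVec_eq_zero_iff.2 (by simp [Matrix.det_adjugate, hdet])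
  refine hw (hΩ.eq_zero_of_sum_C_mul_pderiv_eq_zero hn (hinj _ ?_ ?_))
  · refine (totalDegree_finsetSum_le (d := n - 1) fun l _ => ?_).trans_lt (by omega)
    exact (totalDegree_mul _ _).trans (by simpa using hΩ.isHomogeneous.pderiv.totalDegree_le)
  · calc aeval (affineForm M b) (∑ l, C (w l) * pderiv l Ω)
        = ∑ k, C (M.adjugate.mulVec w k) * pderiv k Ω := by
          simp only [map_sum, map_mul, ← h, jacBracket_affineForm, Matrix.mulVec, dotProduct,
            algHom_C, algebraMap_eq, Finset.mul_sum, Finset.sum_mul]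
          rw [Finset.sum_comm]
          exact Finset.sum_congr rfl fun _ _ => Finset.sum_congr rfl fun _ _ => by ring
      _ = 0 := by simp [hMw]

section SurfaceProduct

variable {𝕜 : Type*} [Field 𝕜] {d : ℕ} {Ω : Fin d → MvPolynomial (Fin 3) 𝕜} {n : Fin d → ℕ}
  {ξ : Fin d → 𝕜} {j : Fin d}

lemma factorHom_injOn_totalDegree_lt (hΩ : ∀ i, IsISPotential (Ω i) (n i)) :
    Set.InjOn (factorHom Ω ξ j) {f | f.totalDegree < n j} := fun f hf g hg h => by
  have (i : Fin d) : Nontrivial (PQuot 𝕜 (Ω i) (ξ i)) := PQuot.nontrivial (hΩ i) (ξ i)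
  rw [factorHom, AlgHom.comp_apply, AlgHom.comp_apply] at h
  have hquot := singleAlgHom_injective
    (A := fun i => PQuot 𝕜 (Ω i) (ξ i)) j h
  rw [← sub_eq_zero]
  exact (hΩ j).eq_zero_of_sub_C_dvd (PQuot.mkₐ_eq_mkₐ_iff.1 hquot)
    ((totalDegree_sub _ _).trans_lt (max_lt hf hg))

lemma exists_isAffineSymmetry_map_factorHom_X [IsAlgClosed 𝕜] [CharZero 𝕜]
    (hΩ : ∀ i, IsISPotential (Ω i) (n i)) (hn : ∀ i, 4 ≤ n i) (hinj : Function.Injective n)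
    {P : ∀ i, PoissonStructure 𝕜 (PQuot 𝕜 (Ω i) (ξ i))}
    {PT : PoissonStructure 𝕜 (⨂[𝕜] i, PQuot 𝕜 (Ω i) (ξ i))}
    (hP : ∀ i, IsInducedBracket (Ω i) (ξ i) (P i)) (hPT : IsPiTensorBracket P PT) (j : Fin d)
    {φ : (⨂[𝕜] i, PQuot 𝕜 (Ω i) (ξ i)) ≃ₐ[𝕜] ⨂[𝕜] i, PQuot 𝕜 (Ω i) (ξ i)}
    (hφ : IsPoissonHom PT PT φ.toAlgHom) :
    ∃ M b, IsAffineSymmetry (Ω j) M b ∧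
      ∀ l, φ (factorHom Ω ξ j (X l)) = factorHom Ω ξ j (affineForm M b l) := by
  choose L hL hφL using exists_factorHom_eq_map_factorHom_X hΩ hn hinj hP hPT j hφ
  obtain ⟨M, b, rfl⟩ := exists_eq_affineForm hL
  have hnj := hn j
  have hmap (f : MvPolynomial (Fin 3) 𝕜) :
      φ (factorHom Ω ξ j f) = factorHom Ω ξ j (aeval (affineForm M b) f) := by
    have hcomp : φ.toAlgHom.comp (factorHom Ω ξ j) =
        (factorHom Ω ξ j).comp (aeval (affineForm M b)) :=
      algHom_ext fun l => by simp [hφL]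
    exact AlgHom.congr_fun hcomp f
  have hgrad (l : Fin 3) : jacBracket (Ω j) (affineForm M b (l + 1)) (affineForm M b (l + 2)) =
      aeval (affineForm M b) (pderiv l (Ω j)) := by
    have hpderiv : (pderiv l (Ω j)).totalDegree ≤ n j - 1 :=
      (hΩ j).isHomogeneous.pderiv.totalDegree_le
    refine factorHom_injOn_totalDegree_lt (ξ := ξ) (j := j) hΩ ?_ ?_ ?_
    · exact (totalDegree_jacBracket_le (hΩ j).isHomogeneous (hL _) (hL _)).trans_lt (by omega)
    · exact (totalDegree_aeval_affineForm_le M b hpderiv).trans_lt (by omega)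
    · rw [← hmap, ← bracket_factorHom hP hPT, hφL, hφL]
      exact (map_factorHom_pderiv hP hPT hφ l).symm
  have hdet : M.det ≠ 0 := by
    refine (hΩ j).det_ne_zero_of_jacBracket_affineForm_eq (by omega) hgrad fun f hf h => ?_
    refine factorHom_injOn_totalDegree_lt (ξ := ξ) (j := j) hΩ hf
      (by simpa using (hΩ j).degree_pos) ?_
    rw [map_zero, ← map_eq_zero_iff φ φ.injective, hmap, h, map_zero]
  exact ⟨M, b, ⟨hdet.isUnit, hgrad⟩, fun l => (hφL l).symm⟩

end SurfaceProduct

section LinearAlgebra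

variable {K σ : Type*} [Field K] [Fintype σ]

open Matrix

lemma isRoot_charpoly_iff_exists_mulVec_eq_smul [DecidableEq σ] {A : Matrix σ σ K} {μ : K} :
    A.charpoly.IsRoot μ ↔ ∃ v ≠ 0, A *ᵥ v = μ • v := by
  rw [Polynomial.IsRoot, Matrix.eval_charpoly, ← Matrix.exists_mulVec_eq_zero_iff]
  refine exists_congr fun v => and_congr_right fun _ => ?_
  rw [Matrix.sub_mulVec, sub_eq_zero, eq_comm, Matrix.scalar_apply,
    ← Matrix.smul_one_eq_diagonal, Matrix.smul_mulVec, Matrix.one_mulVec]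

lemma isRoot_charpoly_iff_exists_vecMul_eq_smul [DecidableEq σ] {A : Matrix σ σ K} {μ : K} :
    A.charpoly.IsRoot μ ↔ ∃ v ≠ 0, v ᵥ* A = μ • v := by
  rw [← Matrix.charpoly_transpose, isRoot_charpoly_iff_exists_mulVec_eq_smul]
  simp only [Matrix.mulVec_transpose]

lemma pow_card_eq_zero_of_forall_isRoot_charpoly_eq_zero [IsAlgClosed K] [DecidableEq σ]
    {A : Matrix σ σ K} (h : ∀ μ, A.charpoly.IsRoot μ → μ = 0) : A ^ Fintype.card σ = 0 := by
  have hsplits := IsAlgClosed.splits A.charpoly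
  have hroots : A.charpoly.roots = Multiset.replicate (Fintype.card σ) 0 := by
    refine Multiset.eq_replicate.2 ⟨?_, fun μ hμ => h μ (Polynomial.isRoot_of_mem_roots hμ)⟩
    rw [← hsplits.natDegree_eq_card_roots, Matrix.charpoly_natDegree_eq_dim]
  have hchar : A.charpoly = Polynomial.X ^ Fintype.card σ := by
    rw [hsplits.eq_prod_roots_of_monic A.charpoly_monic, hroots]
    simp
  simpa [hchar] using A.aeval_self_charpoly

lemma exists_mulVec_ne_zero_and_mulVec_mulVec_eq_zero [DecidableEq σ] {A : Matrix σ σ K}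
    (hA : IsNilpotent A) (h0 : A ≠ 0) : ∃ u, A *ᵥ u ≠ 0 ∧ A *ᵥ (A *ᵥ u) = 0 := by
  have := nontrivial_of_ne A 0 h0
  obtain ⟨k, hk⟩ : ∃ k, nilpotencyClass A = k + 2 :=
    Nat.exists_eq_add_of_le' <| (Nat.two_le_iff _).2
      ⟨(pos_nilpotencyClass_iff.2 hA).ne', mt nilpotencyClass_eq_one.1 h0⟩
  obtain ⟨hzero, hne⟩ := nilpotencyClass_eq_succ_iff.1 hk
  obtain ⟨w, hw⟩ : ∃ w, (A ^ (k + 1)) *ᵥ w ≠ 0 := by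
    by_contra! h
    exact hne (Matrix.ext_of_mulVec_single fun i => by rw [h, Matrix.zero_mulVec])
  refine ⟨(A ^ k) *ᵥ w, ?_, ?_⟩
  · rwa [Matrix.mulVec_mulVec, ← pow_succ']
  · rw [Matrix.mulVec_mulVec w, ← pow_succ', Matrix.mulVec_mulVec, ← pow_succ', hzero,
      Matrix.zero_mulVec]

lemma eq_zero_of_mem_of_mapsTo_const_mul {s : Set K} (hs : s.Finite) {c : K}
    (hc : Function.Injective fun k : ℕ => c ^ k) (h : Set.MapsTo (c * ·) s s) {x : K}
    (hx : x ∈ s) : x = 0 := by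
  by_contra hx0
  refine Set.infinite_of_injective_forall_mem (f := fun k : ℕ => c ^ k * x)
    (fun i j hij => hc (mul_right_cancel₀ hx0 hij)) (fun k => ?_) hs
  simpa using h.iterate k hx

open Polynomial in
lemma iterate_derivative_eq_vecMul_pow {R : Type*} [CommRing R] [DecidableEq σ] {q : σ → R[X]}
    {A : Matrix σ σ R} (h : ∀ m, derivative (q m) = (q ᵥ* A.map Polynomial.C) m) (k : ℕ) (m : σ) :
    derivative^[k] (q m) = (q ᵥ* (A ^ k).map Polynomial.C) m := by
  induction k generalizing m with
  | zero => simp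
  | succ k ih =>
    rw [Function.iterate_succ_apply', ih, pow_succ', Matrix.map_mul, ← Matrix.vecMul_vecMul]
    simp only [Matrix.vecMul, dotProduct, Matrix.map_apply, derivative_sum, derivative_mul, h,
      derivative_C, mul_zero, add_zero]

end LinearAlgebra

section AffineVectorField

variable {R σ : Type*} [CommRing R] [Fintype σ]

/-- The vector field `v ↦ M v + b` on affine space, as a derivation of its coordinate ring. -/
noncomputable def affineVectorField (M : Matrix σ σ R) (b : σ → R) :
    Derivation R (MvPolynomial σ R) (MvPolynomial σ R) :=
  mkDerivation R (affineForm M b)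

variable (M : Matrix σ σ R) (b : σ → R)

lemma affineVectorField_apply (p : MvPolynomial σ R) :
    affineVectorField M b p = ∑ l, affineForm M b l * pderiv l p := by
  simpa [affineVectorField, mul_comm] using derivation_aeval (mkDerivation R (affineForm M b)) X p

lemma pderiv_affineVectorField (m : σ) (p : MvPolynomial σ R) :
    pderiv m (affineVectorField M b p) =
      ∑ l, C (M l m) * pderiv l p + affineVectorField M b (pderiv m p) := by
  simp only [affineVectorField_apply, map_sum, Derivation.leibniz, smul_eq_mul, pderiv_affineForm,
    pderiv_pderiv_comm m, Finset.sum_add_distrib]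
  rw [add_comm]
  simp only [mul_comm]

open Matrix in
lemma eval_affineVectorField (v : σ → R) (p : MvPolynomial σ R) :
    eval v (affineVectorField M b p) = ∑ l, (M *ᵥ v + b) l * eval v (pderiv l p) := by
  simp [affineVectorField_apply, affineForm, Matrix.mulVec, dotProduct]

variable {M b} in
lemma isHomogeneous_affineVectorField_zero {p : MvPolynomial σ R} {n : ℕ} (hn : n ≠ 0)
    (hp : p.IsHomogeneous n) : (affineVectorField M 0 p).IsHomogeneous n := by
  rw [affineVectorField_apply]
  refine IsHomogeneous.sum _ _ _ fun l _ => ?_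
  have hlin : (affineForm M 0 l).IsHomogeneous 1 := by
    simpa [affineForm] using IsHomogeneous.sum Finset.univ _ 1 fun m _ =>
      (isHomogeneous_X R m).C_mul (M l m)
  simpa [show 1 + (n - 1) = n by omega] using hlin.mul (hp.pderiv (i := l))

end AffineVectorField

section Lines

variable {R σ : Type*} [CommRing R] (u v : σ → R)

lemma derivative_aeval_line [Fintype σ] (p : MvPolynomial σ R) :
    Polynomial.derivative (aeval (fun l => .C (u l) + .X * .C (v l)) p) =
      ∑ l, Polynomial.C (v l) * aeval (fun l => .C (u l) + .X * .C (v l)) (pderiv l p) := by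
  refine (derivation_aeval Polynomial.derivative' _ p).trans (Finset.sum_congr rfl fun l _ => ?_)
  rw [smul_eq_mul, mul_comm]
  simp [Polynomial.derivative'_apply]

lemma coeff_aeval_line [Finite σ] [NoZeroDivisors R] [CharZero R] {k : ℕ} {p : MvPolynomial σ R}
    (hp : p.IsHomogeneous k) :
    (aeval (fun l => .C (u l) + .X * .C (v l)) p : Polynomial R).coeff k = eval v p := by
  have := Fintype.ofFinite σ
  induction k generalizing p with
  | zero =>
    rw [(totalDegree_eq_zero_iff_eq_C).1 (Nat.le_zero.1 hp.totalDegree_le)]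
    simp
  | succ k ih =>
    have hcoeff := congrArg (Polynomial.coeff · k) (derivative_aeval_line u v p)
    simp only [Polynomial.coeff_derivative, Polynomial.finsetSum_coeff, Polynomial.coeff_C_mul,
      ih hp.pderiv, sum_mul_eval_pderiv hp, mul_comm] at hcoeff
    exact mul_left_cancel₀ (Nat.cast_add_one_ne_zero k) (by simpa using hcoeff)

end Lines

section LinearSyzygies

variable {𝕜 : Type*} [Field 𝕜] {Ω : MvPolynomial (Fin 3) 𝕜} {n : ℕ}

namespace IsISPotential

open Matrix in
lemma isRoot_charpoly_of_affineVectorField_eq_zero (hΩ : IsISPotential Ω n)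
    {N : Matrix (Fin 3) (Fin 3) 𝕜} (h : affineVectorField N 0 Ω = 0) {μ : 𝕜}
    (hμ : N.charpoly.IsRoot μ) : N.charpoly.IsRoot (-((n - 1 : ℕ) : 𝕜) * μ) := by
  obtain ⟨v, hv, hNv⟩ := isRoot_charpoly_iff_exists_mulVec_eq_smul.1 hμ
  refine isRoot_charpoly_iff_exists_vecMul_eq_smul.2
    ⟨fun l => eval v (pderiv l Ω), fun h0 => hv ?_, funext fun m => ?_⟩
  · exact hΩ.eq_zero_of_forall_eval_pderiv_eq_zero fun l => congrFun h0 l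
  · have hm := congrArg (fun p => eval v (pderiv m p)) h
    simp only [pderiv_affineVectorField, map_add, eval_affineVectorField, hNv, add_zero,
      Pi.smul_apply, smul_eq_mul, mul_assoc, ← Finset.mul_sum, map_zero, map_sum, map_mul, eval_C,
      sum_mul_eval_pderiv hΩ.isHomogeneous.pderiv] at hm
    simp only [Matrix.vecMul, dotProduct, mul_comm (eval v _), Pi.smul_apply, smul_eq_mul]
    linear_combination hm

variable [CharZero 𝕜]

open Matrix in
-- On a line `t ↦ u + t N u` with `N² u = 0` the gradient `q` of `Ω` solves `q' = - q N`, so it has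
-- degree less than `k` in `t`; its coefficient of degree `n - 1` is the gradient of `Ω` at `N u`.
lemma eq_zero_of_pow_eq_zero_of_affineVectorField_eq_zero (hΩ : IsISPotential Ω n) {k : ℕ}
    (hk : k < n) {N : Matrix (Fin 3) (Fin 3) 𝕜} (hN : N ^ k = 0)
    (h : affineVectorField N 0 Ω = 0) : N = 0 := by
  by_contra hN0
  obtain ⟨u, hu, hu'⟩ := exists_mulVec_ne_zero_and_mulVec_mulVec_eq_zero ⟨k, hN⟩ hN0
  let x : Fin 3 → Polynomial 𝕜 := fun l => .C (u l) + .X * .C ((N *ᵥ u) l)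
  have hx (l : Fin 3) : aeval x (affineForm N 0 l) = Polynomial.C ((N *ᵥ u) l) := by
    have hNN : ∑ m, N l m * (N *ᵥ u) m = 0 := congrFun hu' l
    calc aeval x (affineForm N 0 l)
        = Polynomial.C (∑ m, N l m * u m) +
            Polynomial.X * Polynomial.C (∑ m, N l m * (N *ᵥ u) m) := by
          simp only [x, aeval_affineForm, Polynomial.algebraMap_eq, Pi.zero_apply, map_zero,
            add_zero, mul_add, Finset.sum_add_distrib, map_sum, map_mul, Finset.mul_sum,
            mul_left_comm]
      _ = Polynomial.C ((N *ᵥ u) l) := by rw [hNN, map_zero, mul_zero, add_zero]; rfl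
  have hq (m : Fin 3) : Polynomial.derivative (aeval x (pderiv m Ω)) =
      ((fun l => aeval x (pderiv l Ω)) ᵥ* (-N).map Polynomial.C) m := by
    have hm : aeval x (pderiv m (affineVectorField N 0 Ω)) = 0 := by rw [h, map_zero, map_zero]
    rw [pderiv_affineVectorField, affineVectorField_apply] at hm
    simp only [map_add, map_sum, map_mul, hx, algHom_C, Polynomial.algebraMap_eq] at hm
    rw [derivative_aeval_line, eq_neg_of_add_eq_zero_right hm]
    simp [Matrix.vecMul, dotProduct, mul_comm]
  refine hu (hΩ.eq_zero_of_forall_eval_pderiv_eq_zero fun m => ?_)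
  have hiter : Polynomial.derivative^[k] (aeval x (pderiv m Ω)) = 0 := by
    rw [iterate_derivative_eq_vecMul_pow hq, neg_pow, hN]
    simp
  have hcoeff := Polynomial.ext_iff.1 hiter (n - 1 - k)
  rw [← coeff_aeval_line u (N *ᵥ u) hΩ.isHomogeneous.pderiv, show n - 1 = n - 1 - k + k by omega]
  rw [Polynomial.coeff_iterate_derivative, Polynomial.coeff_zero, nsmul_eq_mul, mul_eq_zero,
    Nat.cast_eq_zero, Nat.descFactorial_eq_zero_iff_lt] at hcoeff
  exact hcoeff.resolve_left (by omega)

lemma eq_zero_of_affineVectorField_eq_zero [IsAlgClosed 𝕜] (hΩ : IsISPotential Ω n) (hn : 4 ≤ n)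
    {N : Matrix (Fin 3) (Fin 3) 𝕜} (h : affineVectorField N 0 Ω = 0) : N = 0 := by
  have hinj : Function.Injective fun k : ℕ => (-((n - 1 : ℕ) : 𝕜)) ^ k := by
    have hint := Int.cast_injective (α := 𝕜) |>.comp
      (Int.pow_right_injective (a := -((n - 1 : ℕ) : ℤ)) (by omega))
    simpa [Function.comp_def] using hint
  refine hΩ.eq_zero_of_pow_eq_zero_of_affineVectorField_eq_zero (k := 3) (by omega) ?_ h
  refine pow_card_eq_zero_of_forall_isRoot_charpoly_eq_zero (A := N) fun μ hμ => ?_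
  exact eq_zero_of_mem_of_mapsTo_const_mul
    (Polynomial.finite_setOfPred_isRoot N.charpoly_monic.ne_zero) hinj
    (fun _ => hΩ.isRoot_charpoly_of_affineVectorField_eq_zero h) hμ

lemma eq_smul_one_of_affineVectorField_eq_C_mul [IsAlgClosed 𝕜] (hΩ : IsISPotential Ω n)
    (hn : 4 ≤ n) {E : Matrix (Fin 3) (Fin 3) 𝕜} {γ : 𝕜}
    (h : affineVectorField E 0 Ω = C γ * Ω) : E = (γ / n) • 1 := by
  refine sub_eq_zero.1 (hΩ.eq_zero_of_affineVectorField_eq_zero hn ?_)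
  have hform (l : Fin 3) : affineForm (E - (γ / n) • 1) 0 l =
      affineForm E 0 l - C (γ / n) * X l := by
    simp [affineForm, sub_mul, Matrix.one_apply, apply_ite C]
  have hn0 : (n : 𝕜) ≠ 0 := Nat.cast_ne_zero.2 (by omega)
  simp only [affineVectorField_apply] at h ⊢
  simp only [hform, sub_mul, Finset.sum_sub_distrib, h, mul_assoc, ← Finset.mul_sum,
    hΩ.isHomogeneous.sum_X_mul_pderiv]
  rw [nsmul_eq_mul, ← mul_assoc, ← C_eq_coe_nat, ← C_mul, div_mul_cancel₀ _ hn0, sub_self]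

-- Split the identity into its components of degrees `n` and `n - 1`.
lemma eq_zero_of_affineVectorField_eq_C_trace_mul_add_C [IsAlgClosed 𝕜] (hΩ : IsISPotential Ω n)
    (hn : 4 ≤ n) {E : Matrix (Fin 3) (Fin 3) 𝕜} {h : Fin 3 → 𝕜} {c : 𝕜}
    (hE : affineVectorField E h Ω = C E.trace * Ω + C c) : E = 0 ∧ h = 0 := by
  have hsplit : affineVectorField E h Ω = affineVectorField E 0 Ω + ∑ l, C (h l) * pderiv l Ω := by
    simp [affineVectorField_apply, affineForm, add_mul, Finset.sum_add_distrib]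
  have hlin := isHomogeneous_affineVectorField_zero (M := E) (by omega) hΩ.isHomogeneous
  have hconst : (∑ l, C (h l) * pderiv l Ω).IsHomogeneous (n - 1) :=
    IsHomogeneous.sum _ _ _ fun l _ => hΩ.isHomogeneous.pderiv.C_mul (h l)
  rw [hsplit] at hE
  have htop : affineVectorField E 0 Ω = C E.trace * Ω := by
    have := congrArg (homogeneousComponent n) hE
    rwa [map_add, map_add, homogeneousComponent_of_mem hlin, if_pos rfl,
      homogeneousComponent_of_mem hconst, if_neg (by omega),
      homogeneousComponent_of_mem (hΩ.isHomogeneous.C_mul _), if_pos rfl,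
      homogeneousComponent_of_mem (isHomogeneous_C _ c), if_neg (by omega), add_zero,
      add_zero] at this
  have hzero : ∑ l, C (h l) * pderiv l Ω = 0 := by
    have := congrArg (homogeneousComponent (n - 1)) (add_left_cancel (htop ▸ hE))
    rwa [homogeneousComponent_of_mem hconst, if_pos rfl,
      homogeneousComponent_of_mem (isHomogeneous_C _ c), if_neg (by omega)] at this
  refine ⟨?_, hΩ.eq_zero_of_sum_C_mul_pderiv_eq_zero (by omega) hzero⟩
  have hscalar := hΩ.eq_smul_one_of_affineVectorField_eq_C_mul hn htop
  have htrace : n * E.trace = 3 * E.trace := by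
    have hn0 : (n : 𝕜) ≠ 0 := Nat.cast_ne_zero.2 (by omega)
    have := congrArg Matrix.trace hscalar
    rw [Matrix.trace_smul, Matrix.trace_one, Fintype.card_fin, smul_eq_mul] at this
    field_simp at this
    simpa [mul_comm] using this
  have hn3 : (n : 𝕜) ≠ 3 := by exact_mod_cast (by omega : n ≠ 3)
  have hE0 : E.trace = 0 := (mul_eq_mul_right_iff.1 htrace).resolve_left hn3
  rw [hscalar, hE0, zero_div, zero_smul]

end IsISPotential

end LinearSyzygies

section Rigidity

lemma derivation_det_fin_three {R A N : Type*} [CommRing R] [CommRing A] [Algebra R A]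
    [AddCommGroup N] [Module A N] [Module R N] (D : Derivation R A N)
    (M : Matrix (Fin 3) (Fin 3) A) :
    D M.det = ∑ k, ∑ l, M.adjugate k l • D (M l k) := by
  simp only [Matrix.det_fin_three, Matrix.adjugate_fin_three, Fin.sum_univ_three, map_add, map_sub,
    Derivation.leibniz, Matrix.of_apply, Matrix.cons_val', Matrix.cons_val_zero,
    Matrix.cons_val_one, Matrix.cons_val, Matrix.cons_val_fin_one]
  module

lemma eq_zero_of_forall_sum_adjugate_smul_eq_zero {A N σ : Type*} [Fintype σ] [DecidableEq σ]
    [CommRing A] [AddCommGroup N] [Module A N] {M : Matrix σ σ A} (hM : IsUnit M.det) {w : σ → N}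
    (h : ∀ k, ∑ l, M.adjugate k l • w l = 0) (m : σ) : w m = 0 := by
  have hdet : M.det • w m = ∑ k, M m k • ∑ l, M.adjugate k l • w l := by
    simp only [Finset.smul_sum, smul_smul]
    rw [Finset.sum_comm]
    simp only [← Finset.sum_smul, ← Matrix.mul_apply, Matrix.mul_adjugate, Matrix.smul_apply,
      Matrix.one_apply]
    simp
  rw [← hM.smul_eq_zero, hdet]
  simp [h]

open Matrix in
lemma derivation_mulVec_add_apply {𝕜 A N σ : Type*} [Fintype σ] [CommRing 𝕜] [CommRing A]
    [Algebra 𝕜 A] [AddCommGroup N] [Module A N] [Module 𝕜 N] [IsScalarTower 𝕜 A N]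
    (D : Derivation 𝕜 A N) (M : Matrix σ σ A) (b : σ → A) (v : σ → 𝕜) (l : σ) :
    D ((M *ᵥ (algebraMap 𝕜 A ∘ v) + b) l) = ∑ m, v m • D (M l m) + D (b l) := by
  simp [mulVec, dotProduct]

open Matrix in
lemma sum_eval_pderiv_smul_adjugate_derivation {𝕜 A N : Type*} [CommRing 𝕜] [CommRing A]
    [Algebra 𝕜 A] [AddCommGroup N] [Module A N] [Module 𝕜 N] [IsScalarTower 𝕜 A N]
    (D : Derivation 𝕜 A N) {p : MvPolynomial (Fin 3) 𝕜} {M : Matrix (Fin 3) (Fin 3) A}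
    {b : Fin 3 → A} {v : Fin 3 → 𝕜}
    (hgrad : ∀ l, aeval (M *ᵥ (algebraMap 𝕜 A ∘ v) + b) (pderiv l p) =
      ∑ k, M.adjugate k l * algebraMap 𝕜 A (eval v (pderiv k p)))
    (hself : aeval (M *ᵥ (algebraMap 𝕜 A ∘ v) + b) p =
      M.det * algebraMap 𝕜 A (eval v p) + aeval b p) :
    ∑ k, eval v (pderiv k p) • (∑ m, v m • ∑ l, M.adjugate k l • D (M l m) +
        ∑ l, M.adjugate k l • D (b l)) =
      eval v p • ∑ k, ∑ l, M.adjugate k l • D (M l k) + D (aeval b p) := by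
  have hinner (k : Fin 3) : ∑ m, v m • ∑ l, M.adjugate k l • D (M l m) +
      ∑ l, M.adjugate k l • D (b l) =
      ∑ l, M.adjugate k l • D ((M *ᵥ (algebraMap 𝕜 A ∘ v) + b) l) := by
    simp only [derivation_mulVec_add_apply, smul_add, Finset.smul_sum, Finset.sum_add_distrib]
    rw [Finset.sum_comm]
    simp only [smul_comm (v _)]
  have hD := congrArg D hself
  rw [map_add, Derivation.leibniz, Derivation.map_algebraMap, smul_zero, zero_add,
    algebraMap_smul, derivation_det_fin_three, derivation_aeval D _ p] at hD
  rw [← hD]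
  simp only [hinner, hgrad, Finset.sum_smul]
  rw [Finset.sum_comm]
  simp only [Finset.smul_sum, mul_smul, algebraMap_smul, smul_comm (eval v _)]

open Matrix in
lemma IsISPotential.derivation_eq_zero {𝕜 A N : Type*} [Field 𝕜] [CharZero 𝕜]
    [IsAlgClosed 𝕜] {Ω : MvPolynomial (Fin 3) 𝕜} {n : ℕ} (hΩ : IsISPotential Ω n) (hn : 4 ≤ n)
    [CommRing A] [Algebra 𝕜 A] [AddCommGroup N] [Module A N] [Module 𝕜 N] [IsScalarTower 𝕜 A N]
    (D : Derivation 𝕜 A N) {M : Matrix (Fin 3) (Fin 3) A} {b : Fin 3 → A} (hM : IsUnit M.det)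
    (hgrad : ∀ (v : Fin 3 → 𝕜) l, aeval (M *ᵥ (algebraMap 𝕜 A ∘ v) + b) (pderiv l Ω) =
      ∑ k, M.adjugate k l * algebraMap 𝕜 A (eval v (pderiv k Ω)))
    (hself : ∀ v : Fin 3 → 𝕜, aeval (M *ᵥ (algebraMap 𝕜 A ∘ v) + b) Ω =
      M.det * algebraMap 𝕜 A (eval v Ω) + aeval b Ω) :
    (∀ l m, D (M l m) = 0) ∧ ∀ l, D (b l) = 0 := by
  let E (k m : Fin 3) : N := ∑ l, M.adjugate k l • D (M l m)
  let h (k : Fin 3) : N := ∑ l, M.adjugate k l • D (b l)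
  have hEh (v : Fin 3 → 𝕜) : ∑ k, eval v (pderiv k Ω) • (∑ m, v m • E k m + h k) =
      eval v Ω • ∑ k, E k k + D (aeval b Ω) :=
    sum_eval_pderiv_smul_adjugate_derivation D (hgrad v) (hself v)
  have hdual (f : Module.Dual 𝕜 N) :
      (Matrix.of fun k m => f (E k m)) = 0 ∧ (fun k => f (h k)) = 0 := by
    refine hΩ.eq_zero_of_affineVectorField_eq_C_trace_mul_add_C hn
      (c := f (D (aeval b Ω))) (MvPolynomial.funext fun v => ?_)
    have hf := congrArg f (hEh v)
    simp only [map_add, map_sum, map_smul, smul_eq_mul] at hf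
    rw [eval_affineVectorField, map_add, map_mul, eval_C, eval_C, mul_comm (Matrix.trace _)]
    simpa only [mulVec, dotProduct, Pi.add_apply, Matrix.of_apply, Matrix.trace, Matrix.diag,
      mul_comm] using hf
  have hE (k m : Fin 3) : E k m = 0 :=
    (Module.forall_dual_apply_eq_zero_iff 𝕜 _).1 fun f => congrFun₂ (hdual f).1 k m
  have hh (k : Fin 3) : h k = 0 :=
    (Module.forall_dual_apply_eq_zero_iff 𝕜 _).1 fun f => congrFun (hdual f).2 k
  exact ⟨fun l m => eq_zero_of_forall_sum_adjugate_smul_eq_zero hM (w := fun l => D (M l m))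
      (fun k => hE k m) l, fun l => eq_zero_of_forall_sum_adjugate_smul_eq_zero hM hh l⟩

end Rigidity

section Finiteness

lemma moduleFinite_of_forall_mem_kaehlerD_eq_zero {𝕜 A : Type*} [Field 𝕜] [CommRing A]
    [Algebra 𝕜 A] {T : Set A} (hT : T.Finite) (hA : Algebra.adjoin 𝕜 T = ⊤)
    (hD : ∀ t ∈ T, KaehlerDifferential.D 𝕜 A t = 0) : Module.Finite 𝕜 A := by
  have hD₀ (a : A) : KaehlerDifferential.D 𝕜 A a = 0 :=
    Derivation.eqOn_adjoin (D2 := 0) hD (hA ▸ Algebra.mem_top : a ∈ Algebra.adjoin 𝕜 T)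
  have : Subsingleton Ω[A⁄𝕜] := by
    rw [← Submodule.subsingleton_iff A, ← subsingleton_iff_bot_eq_top,
      ← KaehlerDifferential.span_range_derivation, eq_comm, Submodule.span_eq_bot]
    rintro _ ⟨a, rfl⟩
    exact hD₀ a
  have : Algebra.FormallyUnramified 𝕜 A := ⟨this⟩
  have : Algebra.FiniteType 𝕜 A := ⟨Subalgebra.fg_def.2 ⟨T, hT, hA⟩⟩
  exact Algebra.FormallyUnramified.finite_of_free 𝕜 A

lemma algHom_aeval_eq_eval {R A σ : Type*} [CommSemiring R] [CommSemiring A] [Algebra R A]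
    (f : A →ₐ[R] R) (x : σ → A) (p : MvPolynomial σ R) : f (aeval x p) = eval (f ∘ x) p := by
  rw [← AlgHom.comp_apply, comp_aeval, ← coe_aeval_eq_eval]
  rfl

open Matrix in
lemma algHom_aeval_mulVec_add {R A σ : Type*} [Fintype σ] [CommRing R] [CommRing A]
    [Algebra R A] (f : A →ₐ[R] R) (M : Matrix σ σ A) (b : σ → A) (v : σ → R)
    (p : MvPolynomial σ R) :
    f (aeval (M *ᵥ (algebraMap R A ∘ v) + b) p) =
      eval v (aeval (affineForm (M.map f) (f ∘ b)) p) := by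
  rw [eval_aeval_affineForm, algHom_aeval_eq_eval]
  congr 2
  ext l
  simp [mulVec, dotProduct]

lemma IsISPotential.derivation_eq_zero_of_forall_isAffineSymmetry {𝕜 A N S : Type*} [Field 𝕜]
    [CharZero 𝕜] [IsAlgClosed 𝕜] {Ω : MvPolynomial (Fin 3) 𝕜} {n : ℕ} (hΩ : IsISPotential Ω n)
    (hn : 4 ≤ n) [CommRing A] [Algebra 𝕜 A] [AddCommGroup N] [Module A N] [Module 𝕜 N]
    [IsScalarTower 𝕜 A N] (D : Derivation 𝕜 A N) (ev : S → A →ₐ[𝕜] 𝕜)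
    (hev : ∀ a a', (∀ s, ev s a = ev s a') → a = a') {M : Matrix (Fin 3) (Fin 3) A}
    {b : Fin 3 → A} (hM : IsUnit M.det)
    (hMb : ∀ s, IsAffineSymmetry Ω (M.map (ev s)) (ev s ∘ b)) :
    (∀ l m, D (M l m) = 0) ∧ ∀ l, D (b l) = 0 := by
  have hadj (s : S) : (M.map (ev s)).adjugate = M.adjugate.map (ev s) :=
    (AlgHom.map_adjugate (ev s) M).symm
  have hdet (s : S) : (M.map (ev s)).det = ev s M.det := (AlgHom.map_det (ev s) M).symm
  refine hΩ.derivation_eq_zero hn D hM (fun v l => hev _ _ fun s => ?_)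
    (fun v => hev _ _ fun s => ?_)
  · rw [algHom_aeval_mulVec_add, (hMb s).aeval_pderiv, hadj]
    simp
  · rw [algHom_aeval_mulVec_add, (hMb s).aeval_self hΩ.isHomogeneous (by omega), hdet,
      ← algHom_aeval_eq_eval]
    simp

lemma IsISPotential.finite_setOf_isAffineSymmetry {𝕜 : Type*} [Field 𝕜] [CharZero 𝕜]
    [IsAlgClosed 𝕜] {Ω : MvPolynomial (Fin 3) 𝕜} {n : ℕ} (hΩ : IsISPotential Ω n) (hn : 4 ≤ n) :
    {p : Matrix (Fin 3) (Fin 3) 𝕜 × (Fin 3 → 𝕜) | IsAffineSymmetry Ω p.1 p.2}.Finite := by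
  let S := {p : Matrix (Fin 3) (Fin 3) 𝕜 × (Fin 3 → 𝕜) // IsAffineSymmetry Ω p.1 p.2}
  let μ (l : Fin 3 × Fin 3) (s : S) : 𝕜 := s.1.1 l.1 l.2
  let β (l : Fin 3) (s : S) : 𝕜 := s.1.2 l
  let δ (s : S) : 𝕜 := s.1.1.det⁻¹
  let T : Set (S → 𝕜) := Set.range μ ∪ Set.range β ∪ {δ}
  let A := Algebra.adjoin 𝕜 T
  let M : Matrix (Fin 3) (Fin 3) A := .of fun l m => ⟨μ (l, m), Algebra.subset_adjoin (by simp [T])⟩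
  let b (l : Fin 3) : A := ⟨β l, Algebra.subset_adjoin (by simp [T])⟩
  let u : A := ⟨δ, Algebra.subset_adjoin (by simp [T])⟩
  let ev (s : S) : A →ₐ[𝕜] 𝕜 := (Pi.evalAlgHom 𝕜 _ s).comp A.val
  have hev (a a' : A) (h : ∀ s, ev s a = ev s a') : a = a' := Subtype.ext (funext h)
  have hu : u * M.det = 1 := hev _ _ fun s => by
    rw [map_mul, AlgHom.map_det, map_one]
    exact inv_mul_cancel₀ s.2.isUnit_det.ne_zero
  obtain ⟨hDM, hDb⟩ := hΩ.derivation_eq_zero_of_forall_isAffineSymmetry hn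
    (KaehlerDifferential.D 𝕜 A) ev hev (b := b) (.of_mul_eq_one_right _ hu) fun s => s.2
  have hDu : KaehlerDifferential.D 𝕜 A u = 0 := by
    rw [Derivation.leibniz_of_mul_eq_one _ hu, derivation_det_fin_three]
    simp [hDM]
  have : Module.Finite 𝕜 A := by
    refine moduleFinite_of_forall_mem_kaehlerD_eq_zero
      (T.toFinite.preimage Subtype.val_injective.injOn) Algebra.adjoin_adjoin_coe_preimage ?_
    rintro ⟨_, _⟩ ((⟨⟨l, m⟩, rfl⟩ | ⟨l, rfl⟩) | rfl)
    exacts [hDM l m, hDb l, hDu]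
  refine Finite.of_injective ev fun s t hst => ?_
  have hst' (a : A) : a.1 s = a.1 t := DFunLike.congr_fun hst a
  exact Subtype.ext (Prod.ext (Matrix.ext fun l m => hst' (M l m)) (funext fun l => hst' (b l)))

end Finiteness

section Automorphisms

open PiTensorProduct

lemma algHom_ext_factorHom_X {𝕜 B : Type*} [Field 𝕜] [Semiring B] [Algebra 𝕜 B] {d : ℕ}
    {Ω : Fin d → MvPolynomial (Fin 3) 𝕜} {ξ : Fin d → 𝕜}
    {f g : (⨂[𝕜] i, PQuot 𝕜 (Ω i) (ξ i)) →ₐ[𝕜] B}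
    (h : ∀ j l, f (factorHom Ω ξ j (X l)) = g (factorHom Ω ξ j (X l))) : f = g := by
  refine PiTensorProduct.algHom_ext fun j => ?_
  have hcomp : f.comp (factorHom Ω ξ j) = g.comp (factorHom Ω ξ j) :=
    MvPolynomial.algHom_ext fun l => h j l
  ext a
  obtain ⟨p, rfl⟩ := PQuot.mkₐ_surjective (Ω j) (ξ j) a
  exact AlgHom.congr_fun hcomp p

theorem finite_poissonAut_of_tensorProduct_of_potentials_general
    {𝕜 : Type*} [Field 𝕜] [IsAlgClosed 𝕜] [CharZero 𝕜]
    (d : ℕ) (Ω : Fin d → MvPolynomial (Fin 3) 𝕜) (n : Fin d → ℕ)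
    (hhom : ∀ i, (Ω i).IsHomogeneous (n i))
    (hiso : ∀ i, HasIsolatedSingularity (Ω i))
    (hdeg : ∀ i, 4 ≤ n i)
    (hdist : Function.Injective n)
    (ξ : Fin d → 𝕜)
    (P : ∀ i, PoissonStructure 𝕜 (PQuot 𝕜 (Ω i) (ξ i)))
    (hP : ∀ i, IsInducedBracket (Ω i) (ξ i) (P i))
    (PT : PoissonStructure 𝕜 (⨂[𝕜] i, PQuot 𝕜 (Ω i) (ξ i)))
    (hPT : IsPiTensorBracket P PT) :
    Finite {f : (⨂[𝕜] i, PQuot 𝕜 (Ω i) (ξ i)) ≃ₐ[𝕜] ⨂[𝕜] i, PQuot 𝕜 (Ω i) (ξ i) //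
      ∀ a b, f (PT.bracket a b) = PT.bracket (f a) (f b)} := by
  have hΩ (i : Fin d) : IsISPotential (Ω i) (n i) := ⟨hhom i, hiso i⟩
  choose M b hMb hX using fun (φ : {f : (⨂[𝕜] i, PQuot 𝕜 (Ω i) (ξ i)) ≃ₐ[𝕜]
      ⨂[𝕜] i, PQuot 𝕜 (Ω i) (ξ i) // ∀ a b, f (PT.bracket a b) = PT.bracket (f a) (f b)}) j =>
    exists_isAffineSymmetry_map_factorHom_X hΩ hdeg hdist hP hPT j φ.2
  let F φ (j : Fin d) := (M φ j, b φ j)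
  have : Finite (Set.range F) :=
    (Set.Finite.pi' fun j => (hΩ j).finite_setOf_isAffineSymmetry (hdeg j)).subset
      (Set.range_subset_iff.2 hMb)
  refine Finite.of_injective_finite_range (f := F) fun φ ψ h => Subtype.ext
    (AlgEquiv.coe_toAlgHom_injective (algHom_ext_factorHom_X fun j l => ?_))
  obtain ⟨hM, hb⟩ : M φ j = M ψ j ∧ b φ j = b ψ j := Prod.mk.inj (congrFun h j)
  have hφψ := hX φ j l
  rw [hM, hb, ← hX ψ j l] at hφψ
  exact hφψ

end Automorphisms

end

open PiTensorProduct in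
/-- Theorem 0.2(2): the group of Poisson algebra automorphisms of
`P_{Ω₁-ξ₁} ⊗ ⋯ ⊗ P_{Ω_d-ξ_d}` is finite. -/
theorem finite_poissonAut_of_tensorProduct_of_potentials
    {𝕜 : Type*} [Field 𝕜] [IsAlgClosed 𝕜] [CharZero 𝕜]
    (d : ℕ) (Ω : Fin d → MvPolynomial (Fin 3) 𝕜) (n : Fin d → ℕ)
    (hhom : ∀ i, (Ω i).IsHomogeneous (n i))
    (hiso : ∀ i, HasIsolatedSingularity (Ω i))
    (hdeg : ∀ i, 5 ≤ n i)
    (hdist : Function.Injective n)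
    (ξ : Fin d → 𝕜)
    (P : ∀ i, PoissonStructure 𝕜 (PQuot 𝕜 (Ω i) (ξ i)))
    (hP : ∀ i, IsInducedBracket (Ω i) (ξ i) (P i))
    (PT : PoissonStructure 𝕜 (⨂[𝕜] i, PQuot 𝕜 (Ω i) (ξ i)))
    (hPT : IsPiTensorBracket P PT) :
    Finite {f : (⨂[𝕜] i, PQuot 𝕜 (Ω i) (ξ i)) ≃ₐ[𝕜] ⨂[𝕜] i, PQuot 𝕜 (Ω i) (ξ i) //
      ∀ a b, f (PT.bracket a b) = PT.bracket (f a) (f b)} :=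
  finite_poissonAut_of_tensorProduct_of_potentials_general d Ω n hhom hiso
    (fun i => (Nat.le_succ 4).trans (hdeg i)) hdist ξ P hP PT hPT
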